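/- There exist absolute constants C₀ > 0 and c > 0 such that for every prime p and every finite symmetric generating set A of SL₂(F_p) with |A| ≥ C₀, either A³ = SL₂(F_p) or |A³| ≥ c·|A|^(1+1/20). -/

import Mathlib

open Pointwise

instance (p : ℕ) : DecidableEq (Matrix.SpecialLinearGroup (Fin 2) (ZMod p)) := by
  unfold Matrix.SpecialLinearGroup
  infer_instance

/-!
Suppose `#(A ^ 3) ≤ K * #A` with `K` a small power of `#A`. Stabilizers of points of the projective
line are cut down to `{1, -1}` by two conjugations by elements of `A`, so only a small part of `A`
maps a given point to a given point. Take `g ∈ A ^ 2` with trace `t` different from `0` and `±2`.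
Three conjugates `x, y, z` of `g` by elements of `A` satisfy `tr x = tr (u x) = tr (v x) = t` with
`u = y x⁻¹` and `v = z x⁻¹` in `A ^ 8`; in general position these equations have at most two
solutions `x`, so there are few conjugates, and the torus `C(g)` must be rich:
`#A ^ 3 ≤ 4 * #(C(g) ∩ A ^ 2) ^ 3 * #(A ^ 8) ^ 2`. Pivoting from a torus with the fewest elements of
`A ^ 2` shows that each of its conjugates is at least as rich. Distinct tori are almost disjoint, so
`A ^ 2` has on the order of `q ^ 2` times as many elements as a single torus, which makes `A` large
in terms of `q`. For `q = p` prime, Frobenius' bound `(p - 1) / 2` on the dimension of a nontrivial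
representation makes `SL(2, 𝔽_p)` quasirandom, and Gowers' inequalities for products of large sets
finish the proof.
-/

open Finset Matrix MulAction
open scoped MatrixGroups LinearAlgebra.Projectivization

namespace SL2Growth

/-! ### Counting in groups -/

section GroupCounting

variable {G : Type*} [Group G]

lemma exists_mem_smul_notMem {X : Type*} [MulAction G X] [IsPretransitive G X] {A : Set G}
    (hgen : Subgroup.closure A = ⊤) {s : Set X} (hfin : s.Finite) (hne : s.Nonempty)
    (huniv : s ≠ Set.univ) : ∃ a ∈ A, ∃ x ∈ s, a • x ∉ s := by
  by_contra! h
  have hstab : stabilizer G s = ⊤ := by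
    rw [← top_le_iff, ← hgen, Subgroup.closure_le]
    intro a ha
    rw [SetLike.mem_coe, mem_stabilizer_set_iff_smul_set_subset hfin]
    rintro _ ⟨x, hx, rfl⟩
    exact h a ha x hx
  obtain ⟨x, hx⟩ := hne
  refine huniv (Set.eq_univ_of_forall fun y ↦ ?_)
  obtain ⟨g, rfl⟩ := exists_smul_eq G x y
  have hg : g • s = s := mem_stabilizer_iff.1 (hstab ▸ Subgroup.mem_top g)
  exact hg ▸ Set.smul_mem_smul_set hx

variable [DecidableEq G] {A : Finset G}

lemma mul_mem_pow_add {m n : ℕ} {g h : G} (hg : g ∈ A ^ m) (hh : h ∈ A ^ n) :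
    g * h ∈ A ^ (m + n) :=
  pow_add A m n ▸ mul_mem_mul hg hh

lemma inv_mem_pow (hA : A⁻¹ = A) {m : ℕ} {g : G} (hg : g ∈ A ^ m) : g⁻¹ ∈ A ^ m := by
  rw [← hA, inv_pow]
  exact inv_mem_inv hg

open scoped Classical in
lemma card_filter_le_card_filter_sq_mem_subgroup (hA : A⁻¹ = A) (H : Subgroup G) {P : G → Prop}
    (hP : ∀ a b, P a → P b → a⁻¹ * b ∈ H) : #{a ∈ A | P a} ≤ #{g ∈ A ^ 2 | g ∈ H} := by
  rcases {a ∈ A | P a}.eq_empty_or_nonempty with hempty | ⟨a, ha⟩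
  · simp [hempty]
  rw [mem_filter] at ha
  refine card_le_card_of_injOn (a⁻¹ * ·) (fun b hb ↦ ?_) (mul_right_injective _).injOn
  simp only [coe_filter, Set.mem_ofPred_eq] at hb ⊢
  refine ⟨?_, hP a b ha.2 hb.2⟩
  rw [sq]
  exact mul_mem_mul (hA ▸ inv_mem_inv ha.1) hb.1

-- The map `(x, y) ↦ x * a * y` has fibres of size at most `#(H ∩ a L a⁻¹)`.
open scoped Classical in
lemma card_mem_mul_card_mem_le (hA : A⁻¹ = A) (H L : Subgroup G) {a : G} (ha : a ∈ A) (m k : ℕ) :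
    #{g ∈ A ^ m | g ∈ H} * #{g ∈ A ^ k | g ∈ L} ≤
      #{g ∈ A ^ (m + m) | g ∈ H ∧ a⁻¹ * g * a ∈ L} * #(A ^ (m + 1 + k)) := by
  rw [← card_product]
  refine card_le_mul_card_image_of_maps_to (f := fun q ↦ q.1 * a * q.2) ?_ _ fun b _ ↦ ?_
  · rintro ⟨x, y⟩ hxy
    simp only [mem_product, mem_filter] at hxy
    exact mul_mem_pow_add (mul_mem_pow_add hxy.1.1 (by rwa [pow_one])) hxy.2.1
  set fibre := ({g ∈ A ^ m | g ∈ H} ×ˢ {g ∈ A ^ k | g ∈ L}).filter fun q ↦ q.1 * a * q.2 = b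
  rcases fibre.eq_empty_or_nonempty with hempty | ⟨⟨x₀, y₀⟩, h₀⟩
  · simp [hempty]
  simp only [fibre, mem_filter, mem_product] at h₀
  obtain ⟨⟨⟨hx₀A, hx₀⟩, -, hy₀⟩, hb₀⟩ := h₀
  refine card_le_card_of_injOn (fun q ↦ x₀⁻¹ * q.1) ?_ ?_
  · rintro ⟨x, y⟩ hxy
    simp only [fibre, coe_filter, mem_product, mem_filter, Set.mem_ofPred_eq] at hxy ⊢
    obtain ⟨⟨⟨hxA, hx⟩, -, hy⟩, hb⟩ := hxy
    refine ⟨mul_mem_pow_add (inv_mem_pow hA hx₀A) hxA, mul_mem (inv_mem hx₀) hx, ?_⟩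
    have hconj : a⁻¹ * (x₀⁻¹ * x) * a = y₀ * y⁻¹ := by
      rw [← hb₀] at hb
      calc a⁻¹ * (x₀⁻¹ * x) * a = a⁻¹ * x₀⁻¹ * (x * a * y) * y⁻¹ := by group
        _ = y₀ * y⁻¹ := by rw [hb]; group
    exact hconj ▸ mul_mem hy₀ (inv_mem hy)
  · rintro ⟨x, y⟩ hxy ⟨x', y'⟩ hxy' heq
    simp only [fibre, coe_filter, mem_product, mem_filter, Set.mem_ofPred_eq] at hxy hxy'
    obtain rfl : x = x' := mul_left_cancel heq
    rw [mul_left_cancel (hxy.2.trans hxy'.2.symm)]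

end GroupCounting

/-! ### The projective line -/

section ProjectiveLine

variable {F : Type*} [Field F]

lemma mk_eq_mk_iff_cross {v w : Fin 2 → F} (hv : v ≠ 0) (hw : w ≠ 0) :
    Projectivization.mk F v hv = Projectivization.mk F w hw ↔ v 0 * w 1 = v 1 * w 0 := by
  rw [Projectivization.mk_eq_mk_iff']
  refine ⟨?_, fun h ↦ ?_⟩
  · rintro ⟨a, rfl⟩
    simp only [Pi.smul_apply, smul_eq_mul]
    ring
  obtain ⟨i, hi⟩ := Function.ne_iff.1 hw
  simp only [Pi.zero_apply] at hi
  refine ⟨v i / w i, funext fun j ↦ ?_⟩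
  rw [Pi.smul_apply, smul_eq_mul, div_mul_eq_mul_div, div_eq_iff hi]
  fin_cases i <;> fin_cases j <;> grind

lemma smul_mk_eq_mk_iff {g : SL(2, F)} {v w : Fin 2 → F} (hv : v ≠ 0) (hw : w ≠ 0) :
    g • Projectivization.mk F v hv = Projectivization.mk F w hw ↔
      (g 0 0 * v 0 + g 0 1 * v 1) * w 1 = (g 1 0 * v 0 + g 1 1 * v 1) * w 0 := by
  have hgv (i : Fin 2) : (g • v) i = g i 0 * v 0 + g i 1 * v 1 :=
    Fin.sum_univ_two (fun j ↦ g i j * v j)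
  rw [Projectivization.smul_mk, mk_eq_mk_iff_cross, hgv, hgv]

lemma pair_ne_univ (x y : ℙ F (Fin 2 → F)) : ({x, y} : Set (ℙ F (Fin 2 → F))) ≠ Set.univ := by
  intro h
  have hmem (z : ℙ F (Fin 2 → F)) : z = x ∨ z = y := h.ge (Set.mem_univ z)
  have h10 : (![1, 0] : Fin 2 → F) ≠ 0 := by simp
  have h01 : (![0, 1] : Fin 2 → F) ≠ 0 := by simp
  have h11 : (![1, 1] : Fin 2 → F) ≠ 0 := by simp
  have hne₁ : Projectivization.mk F _ h10 ≠ Projectivization.mk F _ h01 := by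
    simp [mk_eq_mk_iff_cross]
  have hne₂ : Projectivization.mk F _ h10 ≠ Projectivization.mk F _ h11 := by
    simp [mk_eq_mk_iff_cross]
  have hne₃ : Projectivization.mk F _ h01 ≠ Projectivization.mk F _ h11 := by
    simp [mk_eq_mk_iff_cross]
  rcases hmem (Projectivization.mk F _ h10) with h₁ | h₁ <;>
  rcases hmem (Projectivization.mk F _ h01) with h₂ | h₂ <;>
  rcases hmem (Projectivization.mk F _ h11) with h₃ | h₃ <;>
  simp_all only [ne_eq, not_true_eq_false]

lemma eq_one_or_eq_neg_one_of_scalar {g : SL(2, F)} (h01 : g 0 1 = 0) (h10 : g 1 0 = 0)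
    (h : g 0 0 = g 1 1) : g = 1 ∨ g = -1 := by
  have hdet : g 1 1 * g 1 1 = 1 := by
    have := g.det_coe
    rwa [det_fin_two, h01, h, zero_mul, sub_zero] at this
  rcases mul_self_eq_one_iff.1 hdet with h11 | h11
  · left
    ext i j
    fin_cases i <;> fin_cases j <;> simp [h01, h10, h, h11]
  · right
    ext i j
    fin_cases i <;> fin_cases j <;> simp [h01, h10, h, h11]

-- By double transitivity the first two fixed points may be taken to be the coordinate axes.
lemma eq_one_or_eq_neg_one_of_smul_eq {g : SL(2, F)} {x y z : ℙ F (Fin 2 → F)} (hxy : x ≠ y)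
    (hxz : x ≠ z) (hyz : y ≠ z) (hx : g • x = x) (hy : g • y = y) (hz : g • z = z) :
    g = 1 ∨ g = -1 := by
  have h10 : (![1, 0] : Fin 2 → F) ≠ 0 := by simp
  have h01 : (![0, 1] : Fin 2 → F) ≠ 0 := by simp
  have haxes : Projectivization.mk F _ h10 ≠ Projectivization.mk F _ h01 := by
    simp [mk_eq_mk_iff_cross]
  obtain ⟨k, hkx, hky⟩ := (is_two_pretransitive_iff (G := SL(2, F))).1 inferInstance hxy haxes
  set d := k * g * k⁻¹ with hd
  have hfix {u : ℙ F (Fin 2 → F)} (hu : g • u = u) : d • k • u = k • u := by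
    simp [hd, mul_smul, hu]
  suffices d = 1 ∨ d = -1 by
    have hg : g = k⁻¹ * d * k := by rw [hd]; group
    rcases this with h | h <;> simp [hg, h]
  have hdx := hkx ▸ hfix hx
  have hdy := hky ▸ hfix hy
  have hdz := hfix hz
  have hzx : k • z ≠ k • x := fun h ↦ hxz (smul_left_cancel k h.symm)
  have hzy : k • z ≠ k • y := fun h ↦ hyz (smul_left_cancel k h.symm)
  induction hw : k • z using Projectivization.ind with | _ w hw0 =>
  rw [hw, hkx, Ne, mk_eq_mk_iff_cross] at hzx
  rw [hw, hky, Ne, mk_eq_mk_iff_cross] at hzy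
  rw [hw, smul_mk_eq_mk_iff] at hdz
  rw [smul_mk_eq_mk_iff] at hdx hdy
  simp only [cons_val_zero, cons_val_one, mul_zero, mul_one, zero_add, add_zero] at *
  refine eq_one_or_eq_neg_one_of_scalar hdy hdx.symm ?_
  rw [hdy, ← hdx] at hdz
  refine mul_right_cancel₀ (mul_ne_zero hzy (Ne.symm hzx)) ?_
  linear_combination hdz

lemma exists_fixedPoints_subset_pair {g : SL(2, F)} (h1 : g ≠ 1) (hneg : g ≠ -1) :
    ∃ e f : ℙ F (Fin 2 → F), ∀ x, g • x = x → x = e ∨ x = f := by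
  by_contra! h
  obtain ⟨x, hx, -⟩ := h (Projectivization.mk F ![1, 0] (by simp))
    (Projectivization.mk F ![1, 0] (by simp))
  obtain ⟨y, hy, hyx, -⟩ := h x x
  obtain ⟨z, hz, hzx, hzy⟩ := h x y
  exact (eq_one_or_eq_neg_one_of_smul_eq hyx.symm hzx.symm hzy.symm hx hy hz).elim h1 hneg

variable [DecidableEq SL(2, F)] {A : Finset SL(2, F)}

open scoped Classical in
lemma card_fix_pair_sq_le (hA : A⁻¹ = A) (hgen : Subgroup.closure (A : Set SL(2, F)) = ⊤)
    {x y : ℙ F (Fin 2 → F)} (hxy : x ≠ y) (m : ℕ) :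
    #{g ∈ A ^ m | g ∈ stabilizer SL(2, F) x ⊓ stabilizer SL(2, F) y} ^ 2 ≤
      2 * #(A ^ (m + 1 + m)) := by
  obtain ⟨a, ha, u, hu, hau⟩ := exists_mem_smul_notMem hgen (Set.toFinite {x, y})
    (Set.insert_nonempty x {y}) (pair_ne_univ x y)
  simp only [Set.mem_insert_iff, Set.mem_singleton_iff, not_or] at hu hau
  rw [sq]
  refine (card_mem_mul_card_mem_le hA _ _ ha m m).trans (Nat.mul_le_mul_right _ ?_)
  refine (card_le_card fun g hg ↦ ?_).trans (card_le_two (a := 1) (b := -1))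
  simp only [mem_filter, Subgroup.mem_inf, mem_stabilizer_iff, mul_smul] at hg
  obtain ⟨-, ⟨hgx, hgy⟩, hgax, hgay⟩ := hg
  have hgau : g • a • u = a • u := by
    rcases hu with rfl | rfl
    · exact inv_smul_eq_iff.1 hgax
    · exact inv_smul_eq_iff.1 hgay
  simpa using eq_one_or_eq_neg_one_of_smul_eq hxy (Ne.symm hau.1) (Ne.symm hau.2) hgx hgy hgau

open scoped Classical in
lemma card_stabilizer_sq_le (hA : A⁻¹ = A) (hgen : Subgroup.closure (A : Set SL(2, F)) = ⊤)
    (x : ℙ F (Fin 2 → F)) (m : ℕ) : ∃ y ≠ x, #{g ∈ A ^ m | g ∈ stabilizer SL(2, F) x} ^ 2 ≤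
      #{g ∈ A ^ (m + m) | g ∈ stabilizer SL(2, F) x ⊓ stabilizer SL(2, F) y} *
        #(A ^ (m + 1 + m)) := by
  obtain ⟨a, ha, u, rfl, hau⟩ := exists_mem_smul_notMem hgen (Set.finite_singleton x)
    (Set.singleton_nonempty x) (by simpa using pair_ne_univ x x)
  refine ⟨a • u, by simpa using hau, ?_⟩
  rw [sq]
  refine (card_mem_mul_card_mem_le hA _ _ ha m m).trans (Nat.mul_le_mul_right _ ?_)
  refine card_le_card (monotone_filter_right _ fun g _ hg ↦ ⟨hg.1, ?_⟩)
  simpa [mul_smul, inv_smul_eq_iff] using hg.2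

open scoped Classical in
theorem card_smul_eq_pow_four_le (hA : A⁻¹ = A)
    (hgen : Subgroup.closure (A : Set SL(2, F)) = ⊤) (x y : ℙ F (Fin 2 → F)) :
    #{a ∈ A | a • x = y} ^ 4 ≤ #(A ^ 5) ^ 2 * (2 * #(A ^ 9)) := by
  obtain ⟨z, hzx, hz⟩ := card_stabilizer_sq_le hA hgen x 2
  calc #{a ∈ A | a • x = y} ^ 4
      ≤ #{g ∈ A ^ 2 | g ∈ stabilizer SL(2, F) x} ^ 4 := by
        refine Nat.pow_le_pow_left (card_filter_le_card_filter_sq_mem_subgroup hA _ ?_) 4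
        intro a b ha hb
        rw [mem_stabilizer_iff, mul_smul, hb, ← ha, inv_smul_smul]
    _ = (#{g ∈ A ^ 2 | g ∈ stabilizer SL(2, F) x} ^ 2) ^ 2 := by ring
    _ ≤ (#{g ∈ A ^ 4 | g ∈ stabilizer SL(2, F) x ⊓ stabilizer SL(2, F) z} * #(A ^ 5)) ^ 2 := by
        gcongr
    _ = #(A ^ 5) ^ 2 * #{g ∈ A ^ 4 | g ∈ stabilizer SL(2, F) x ⊓ stabilizer SL(2, F) z} ^ 2 := by
        ring
    _ ≤ #(A ^ 5) ^ 2 * (2 * #(A ^ 9)) := by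
        gcongr
        exact card_fix_pair_sq_le hA hgen hzx.symm 4

end ProjectiveLine

/-! ### Traces and fixed points -/

section Trace

variable {F : Type*} [Field F]

lemma det_entries_eq_one (g : SL(2, F)) : g 0 0 * g 1 1 - g 0 1 * g 1 0 = 1 := by
  rw [← det_fin_two, g.det_coe]

lemma coe_inv_eq_trace_smul_one_sub (g : SL(2, F)) : (g⁻¹).1 = g.1.trace • 1 - g.1 := by
  ext i j
  fin_cases i <;> fin_cases j <;>
    simp [Matrix.SpecialLinearGroup.SL2_inv_expl, trace_fin_two]

lemma trace_coe_inv_mul (g h : SL(2, F)) : (g⁻¹ * h).1.trace = (h⁻¹ * g).1.trace := by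
  simp only [Matrix.SpecialLinearGroup.coe_mul, coe_inv_eq_trace_smul_one_sub, sub_mul,
    smul_mul_assoc, one_mul, trace_sub, trace_smul, smul_eq_mul, trace_mul_comm g.1 h.1]
  ring

lemma trace_conj (g h : SL(2, F)) : (g * h * g⁻¹).1.trace = h.1.trace := by
  rw [Matrix.SpecialLinearGroup.coe_mul, trace_mul_comm, ← Matrix.SpecialLinearGroup.coe_mul,
    inv_mul_cancel_left]

lemma det_coe_add_smul (g : SL(2, F)) (m : Matrix (Fin 2) (Fin 2) F) (s : F) :
    (g.1 + s • m).det = 1 + s * ((g⁻¹).1 * m).trace + s ^ 2 * m.det := by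
  have hg := det_entries_eq_one g
  simp only [coe_inv_eq_trace_smul_one_sub, sub_mul, smul_mul_assoc, one_mul, trace_sub,
    trace_smul, trace_fin_two, det_fin_two, mul_apply, Fin.sum_univ_two, Matrix.add_apply,
    Matrix.smul_apply, smul_eq_mul]
  linear_combination hg

-- Writing `m = u vᵀ`, the condition `trace (x * m) = 0` says that `x` maps `[u]` to `[v]ᗮ`.
lemma exists_smul_eq_of_det_eq_zero {m : Matrix (Fin 2) (Fin 2) F} (hm : m ≠ 0)
    (hdet : m.det = 0) : ∃ e f : ℙ F (Fin 2 → F),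
      ∀ x : SL(2, F), (x.1 * m).trace = 0 → x • e = f := by
  obtain ⟨i, j, hij⟩ : ∃ i j, m i j ≠ 0 := by
    by_contra! h
    exact hm (Matrix.ext h)
  have hu : (fun k ↦ m k j) ≠ 0 := fun h ↦ hij (congrFun h i)
  have hv : ![m i 1, -m i 0] ≠ 0 := by
    intro h
    have h0 := congrFun h 0
    have h1 := congrFun h 1
    simp only [cons_val_zero, cons_val_one, Pi.zero_apply, neg_eq_zero] at h0 h1
    fin_cases j
    · exact hij h1
    · exact hij h0
  refine ⟨.mk F _ hu, .mk F _ hv, fun x hx ↦ (smul_mk_eq_mk_iff hu hv).2 ?_⟩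
  simp only [trace_fin_two, mul_apply, Fin.sum_univ_two] at hx
  rw [det_fin_two] at hdet
  simp only [cons_val_zero, cons_val_one]
  fin_cases i <;> fin_cases j <;> simp only [Fin.zero_eta, Fin.mk_one] <;> grind

lemma exists_fixedPoint_of_collinear {x y z : SL(2, F)} {s : F} (hs0 : s ≠ 0) (hs1 : s ≠ 1)
    (hz : z.1 = x.1 + s • (y.1 - x.1)) (hxy : x ≠ y) (htr : x.1.trace = y.1.trace) :
    ∃ e : ℙ F (Fin 2 → F), x • e = e ∧ y • e = e ∧
      ∀ g : SL(2, F), (g * x).1.trace = (g * y).1.trace → g • e = e := by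
  set m := y.1 - x.1 with hm
  have hy : y.1 = x.1 + (1 : F) • m := by rw [hm, one_smul, add_sub_cancel]
  have hline_y := det_coe_add_smul x m 1
  have hline_z := det_coe_add_smul x m s
  rw [← hy, y.det_coe] at hline_y
  rw [← hz, z.det_coe] at hline_z
  have hdet : m.det = 0 := by
    refine mul_left_cancel₀ (mul_ne_zero hs0 (sub_ne_zero.2 hs1)) ?_
    linear_combination s * hline_y - hline_z
  have htrm : ((x⁻¹).1 * m).trace = 0 := by linear_combination -hline_y - hdet
  have hm0 : m ≠ 0 := fun h ↦ hxy (Subtype.ext (sub_eq_zero.1 h).symm)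
  have hmul (g : SL(2, F)) : (g.1 * m).trace = (g * y).1.trace - (g * x).1.trace := by
    rw [hm, mul_sub, trace_sub, Matrix.SpecialLinearGroup.coe_mul,
      Matrix.SpecialLinearGroup.coe_mul]
  obtain ⟨e, f, hef⟩ := exists_smul_eq_of_det_eq_zero hm0 hdet
  obtain rfl : e = f := by
    rw [← one_smul SL(2, F) e]
    exact hef 1 (by rw [hmul, one_mul, one_mul, htr, sub_self])
  refine ⟨e, ?_, ?_, fun g hg ↦ hef g (by rw [hmul, hg, sub_self])⟩
  · exact (inv_smul_eq_iff.1 (hef _ htrm)).symm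
  · refine (inv_smul_eq_iff.1 (hef _ ?_)).symm
    rw [hmul] at htrm ⊢
    rw [inv_mul_cancel] at htrm ⊢
    rw [trace_coe_inv_mul, ← neg_sub, htrm, neg_zero]

lemma exists_smul_eq_of_trace_mul_eq_zero {v : Fin 3 → Matrix (Fin 2) (Fin 2) F}
    (hv : LinearIndependent F v) {m m' : Matrix (Fin 2) (Fin 2) F} (hm0 : m ≠ 0)
    (hm : ∀ i, (v i * m).trace = 0) (hm' : ∀ i, (v i * m').trace = 0) : ∃ s : F, s • m = m' := by
  let B : LinearMap.BilinForm F (Matrix (Fin 2) (Fin 2) F) :=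
    (LinearMap.mul F _).compr₂ (traceLinearMap (Fin 2) F F)
  have hrefl : B.IsRefl := fun x y h ↦ (trace_mul_comm y x).trans h
  have hnondeg : B.Nondegenerate := by
    rw [LinearMap.BilinForm.Nondegenerate, hrefl.nondegenerate_iff_separatingLeft]
    exact fun x hx ↦ ext_iff_trace_mul_right.2 fun y ↦ by rw [zero_mul, trace_zero]; exact hx y
  have hortho {x : Matrix (Fin 2) (Fin 2) F} (hx : ∀ i, (v i * x).trace = 0) :
      x ∈ B.orthogonal (Submodule.span F (Set.range v)) := by
    rw [LinearMap.BilinForm.mem_orthogonal_iff]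
    intro y hy
    induction hy using Submodule.span_induction with
    | mem y hy => obtain ⟨i, rfl⟩ := hy; exact hx i
    | zero => exact B.zero_left x
    | add y z _ _ hy hz => exact (B.add_left y z x).trans (by rw [hy, hz, add_zero])
    | smul c y _ hy => exact (B.smul_left c y x).trans (by rw [hy, mul_zero])
  have hrank : Module.finrank F (B.orthogonal (Submodule.span F (Set.range v))) = 1 := by
    rw [LinearMap.BilinForm.finrank_orthogonal hnondeg, finrank_span_eq_card hv,
      Module.finrank_matrix]
    simp
  obtain ⟨s, hs⟩ := (finrank_eq_one_iff_of_nonzero' ⟨m, hortho hm⟩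
    (by simpa using hm0)).1 hrank ⟨m', hortho hm'⟩
  exact ⟨s, congrArg Subtype.val hs⟩

end Trace

section Triples

variable {F : Type*} [Field F]

/-- `g` and `h` have a common fixed point on the projective line, i.e. a common eigenvector over
`F`. -/
def SharesFixedPoint (g h : SL(2, F)) : Prop :=
  ∃ x : ℙ F (Fin 2 → F), g • x = x ∧ h • x = x

section

variable {u v x : SL(2, F)} {t : F}

lemma exists_eq_one_add_smul_of_not_linearIndependent (hu : u ≠ 1) (hv : v ≠ 1) (ht : t ≠ 0)
    (hx : x.1.trace = t) (hux : (u * x).1.trace = t) (hvx : (v * x).1.trace = t)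
    (hdep : ¬ LinearIndependent F ![1, u.1, v.1]) :
    ∃ s : F, s ≠ 0 ∧ v.1 = 1 + s • (u.1 - 1) := by
  obtain ⟨c, hc, hc0⟩ := Fintype.not_linearIndependent_iff.1 hdep
  simp only [Fin.sum_univ_three, cons_val_zero, cons_val_one, Matrix.cons_val] at hc
  have hsum : c 0 + c 1 + c 2 = 0 := by
    have := congrArg (fun m ↦ (m * x.1).trace) hc
    simp only [add_mul, smul_mul_assoc, one_mul, ← Matrix.SpecialLinearGroup.coe_mul, trace_add,
      trace_smul, hx, hux, hvx, smul_eq_mul, zero_mul, trace_zero] at this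
    rw [← add_mul, ← add_mul] at this
    exact (mul_eq_zero.1 this).resolve_right ht
  have hcol : c 2 • (v.1 - 1) = -c 1 • (u.1 - 1) := by
    rw [add_assoc, ← eq_neg_iff_add_eq_zero] at hsum
    rw [← sub_eq_zero, ← hc, hsum]
    module
  have hu' : u.1 - 1 ≠ 0 := fun h ↦ hu (Subtype.ext (sub_eq_zero.1 h))
  have hv' : v.1 - 1 ≠ 0 := fun h ↦ hv (Subtype.ext (sub_eq_zero.1 h))
  have hc1 : c 1 ≠ 0 := by
    intro h1
    have h2 : c 2 = 0 := by simpa [h1, hv'] using hcol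
    obtain ⟨i, hi⟩ := hc0
    fin_cases i
    · exact hi (by simpa [h1, h2] using hsum)
    · exact hi h1
    · exact hi h2
  have hc2 : c 2 ≠ 0 := fun h2 ↦ hc1 (by simpa [h2, hu'] using hcol)
  refine ⟨-c 1 / c 2, div_ne_zero (neg_ne_zero.2 hc1) hc2, ?_⟩
  rw [div_eq_inv_mul, mul_smul, ← hcol, inv_smul_smul₀ hc2, add_sub_cancel]

lemma linearIndependent_of_not_sharesFixedPoint (hu : u ≠ 1) (hv : v ≠ 1) (huv : u ≠ v)
    (ht : t ≠ 0) (hx : x.1.trace = t) (hux : (u * x).1.trace = t) (hvx : (v * x).1.trace = t)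
    (hshare : ¬ SharesFixedPoint x (u * x)) : LinearIndependent F ![1, u.1, v.1] := by
  by_contra hdep
  obtain ⟨s, hs0, hv_eq⟩ :=
    exists_eq_one_add_smul_of_not_linearIndependent hu hv ht hx hux hvx hdep
  have hs1 : s ≠ 1 := by
    rintro rfl
    rw [one_smul, add_sub_cancel] at hv_eq
    exact huv (Subtype.ext hv_eq.symm)
  obtain ⟨e, he, he', -⟩ := exists_fixedPoint_of_collinear (x := x) (y := u * x) (z := v * x)
    hs0 hs1
    (by simp only [Matrix.SpecialLinearGroup.coe_mul, hv_eq, add_mul, sub_mul, smul_mul_assoc,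
      one_mul])
    (by simpa using hu) (hx.trans hux.symm)
  exact hshare ⟨e, he, he'⟩

lemma eq_or_eq_of_trace_eq (hu : u ≠ 1) (hv : v ≠ 1) (huv : u ≠ v) (ht : t ≠ 0)
    (hx : x.1.trace = t) (hux : (u * x).1.trace = t) (hvx : (v * x).1.trace = t)
    (hshare : ¬ SharesFixedPoint x (u * x)) {y z : SL(2, F)}
    (hy : y.1.trace = t) (huy : (u * y).1.trace = t) (hvy : (v * y).1.trace = t)
    (hz : z.1.trace = t) (huz : (u * z).1.trace = t) (hvz : (v * z).1.trace = t) :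
    x = y ∨ x = z ∨ y = z := by
  by_contra! hne
  obtain ⟨hxy, hxz, hyz⟩ := hne
  have hortho {w : SL(2, F)} (hw : w.1.trace = t) (huw : (u * w).1.trace = t)
      (hvw : (v * w).1.trace = t) (i : Fin 3) :
      ((![1, u.1, v.1] : Fin 3 → _) i * (w.1 - x.1)).trace = 0 := by
    fin_cases i <;> simp_all [mul_sub]
  obtain ⟨s, hs⟩ := exists_smul_eq_of_trace_mul_eq_zero
    (linearIndependent_of_not_sharesFixedPoint hu hv huv ht hx hux hvx hshare)
    (fun h ↦ hxy (Subtype.ext (sub_eq_zero.1 h).symm)) (hortho hy huy hvy) (hortho hz huz hvz)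
  have hs0 : s ≠ 0 := by
    rintro rfl
    rw [zero_smul] at hs
    exact hxz (Subtype.ext (sub_eq_zero.1 hs.symm).symm)
  have hs1 : s ≠ 1 := by
    rintro rfl
    rw [one_smul] at hs
    exact hyz (Subtype.ext (sub_left_injective hs))
  obtain ⟨e, he, -, hfix⟩ := exists_fixedPoint_of_collinear hs0 hs1
    (by rw [hs, add_sub_cancel]) hxy (hx.trans hy.symm)
  refine hshare ⟨e, he, ?_⟩
  rw [mul_smul, he, hfix u (hux.trans huy.symm)]

end

open scoped Classical in
lemma card_sharesFixedPoint_le {A : Finset SL(2, F)} {M : ℕ}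
    (hM : ∀ x y : ℙ F (Fin 2 → F), #{a ∈ A | a • x = y} ≤ M) {g : SL(2, F)} (hg1 : g ≠ 1)
    (hgneg : g ≠ -1) (a : SL(2, F)) :
    #{b ∈ A | SharesFixedPoint (a * g * a⁻¹) (b * g * b⁻¹)} ≤ 4 * M := by
  obtain ⟨e, f, hef⟩ := exists_fixedPoints_subset_pair hg1 hgneg
  have hsub : {b ∈ A | SharesFixedPoint (a * g * a⁻¹) (b * g * b⁻¹)} ⊆
      ({e, f} ×ˢ {e, f} : Finset _).biUnion fun q ↦ {b ∈ A | b • q.1 = a • q.2} := by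
    intro b hb
    obtain ⟨hbA, x, hax, hbx⟩ := mem_filter.1 hb
    have hfix {c : SL(2, F)} (hc : (c * g * c⁻¹) • x = x) : c⁻¹ • x = e ∨ c⁻¹ • x = f :=
      hef _ (by simpa [mul_smul, smul_eq_iff_eq_inv_smul] using hc)
    simp only [mem_biUnion, mem_product, mem_insert, mem_singleton, mem_filter]
    exact ⟨(b⁻¹ • x, a⁻¹ • x), ⟨hfix hbx, hfix hax⟩, hbA, by simp⟩
  calc _ ≤ #({e, f} ×ˢ {e, f} : Finset _) * M :=
        (card_le_card hsub).trans (card_biUnion_le_card_mul _ _ _ fun q _ ↦ hM _ _)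
    _ ≤ (2 * 2) * M := by
        rw [card_product]
        gcongr <;> exact card_le_two

end Triples

/-! ### Elements of generic trace and their centralizers -/

section GenericTrace

variable {F : Type*} [Field F]

/-- The trace of `g` is none of `0, 2, -2`: this makes `g` regular semisimple, so that its
centralizer is a torus, and excludes the elements of projective order two. -/
def HasGenericTrace (g : SL(2, F)) : Prop :=
  g.1.trace ≠ 0 ∧ g.1.trace ≠ 2 ∧ g.1.trace ≠ -2

lemma ne_one_of_trace_ne_two {g : SL(2, F)} (hg : g.1.trace ≠ 2) : g ≠ 1 := by
  rintro rfl
  exact hg (by simp)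

lemma ne_neg_one_of_trace_ne_neg_two {g : SL(2, F)} (hg : g.1.trace ≠ -2) : g ≠ -1 := by
  rintro rfl
  exact hg (by simp)

section

variable {h k k' : SL(2, F)}

lemma exists_eq_smul_one_add_smul_of_commute (h1 : h ≠ 1) (hneg : h ≠ -1) (hk : Commute k h) :
    ∃ α β : F, k.1 = α • 1 + β • h.1 := by
  suffices ∃ β : F, k 0 1 = β * h 0 1 ∧ k 1 0 = β * h 1 0 ∧
      k 0 0 - k 1 1 = β * (h 0 0 - h 1 1) by
    obtain ⟨β, h01, h10, hdiag⟩ := this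
    refine ⟨k 0 0 - β * h 0 0, β, ?_⟩
    ext i j
    fin_cases i <;> fin_cases j <;> simp [h01, h10]
    linear_combination -hdiag
  have hentry (i j : Fin 2) : k i 0 * h 0 j + k i 1 * h 1 j = h i 0 * k 0 j + h i 1 * k 1 j := by
    simpa [mul_apply, Fin.sum_univ_two] using congrArg (fun g : SL(2, F) ↦ g i j) hk.eq
  have h00 := hentry 0 0
  have h01 := hentry 0 1
  have h10 := hentry 1 0
  by_cases hh01 : h 0 1 = 0
  · by_cases hh10 : h 1 0 = 0
    · have hdiag : h 0 0 - h 1 1 ≠ 0 := fun hd ↦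
        (eq_one_or_eq_neg_one_of_scalar hh01 hh10 (sub_eq_zero.1 hd)).elim h1 hneg
      exact ⟨(k 0 0 - k 1 1) / (h 0 0 - h 1 1), by grind, by grind, by grind⟩
    · exact ⟨k 1 0 / h 1 0, by grind, by grind, by grind⟩
  · exact ⟨k 0 1 / h 0 1, by grind, by grind, by grind⟩

lemma commute_of_commute_of_commute (h1 : h ≠ 1) (hneg : h ≠ -1) (hk : Commute k h)
    (hk' : Commute k' h) : Commute k k' := by
  obtain ⟨α, β, hk⟩ := exists_eq_smul_one_add_smul_of_commute h1 hneg hk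
  obtain ⟨α', β', hk'⟩ := exists_eq_smul_one_add_smul_of_commute h1 hneg hk'
  refine Subtype.ext ?_
  change k.1 * k'.1 = k'.1 * k.1
  rw [hk, hk']
  simp only [add_mul, mul_add, smul_mul_smul, one_mul, mul_one, mul_comm α', mul_comm β']
  abel

lemma smul_one_add_smul_eq_zero (h2 : h.1.trace ≠ 2) (hneg2 : h.1.trace ≠ -2) {α β : F}
    (htr : (α • 1 + β • h.1).trace = 0) (hdet : (α • 1 + β • h.1).det = 0) :
    α • 1 + β • h.1 = 0 := by
  have hh := det_entries_eq_one h
  simp only [det_fin_two, trace_fin_two, Matrix.add_apply, Matrix.smul_apply, smul_eq_mul,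
    one_apply_eq, ne_eq, zero_ne_one, one_ne_zero, not_false_eq_true, one_apply_ne, mul_zero,
    mul_one, zero_add] at htr hdet h2 hneg2
  have hβ : β = 0 := by
    have hprod : (h 0 0 + h 1 1 - 2) * (h 0 0 + h 1 1 - -2) ≠ 0 :=
      mul_ne_zero (sub_ne_zero.2 h2) (sub_ne_zero.2 hneg2)
    refine pow_eq_zero_iff two_ne_zero |>.1 (mul_right_cancel₀ hprod ?_)
    linear_combination (2 * α + β * (h 0 0 + h 1 1)) * htr - 4 * hdet + 4 * β ^ 2 * hh
  have hα : α = 0 := by simpa [hβ] using hdet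
  simp [hα, hβ]

lemma coe_mul_self (g : SL(2, F)) : g.1 * g.1 = g.1.trace • g.1 - 1 := by
  have := congrArg Subtype.val (mul_inv_cancel g)
  rw [Matrix.SpecialLinearGroup.coe_mul, coe_inv_eq_trace_smul_one_sub, mul_sub, mul_smul_comm,
    mul_one, Matrix.SpecialLinearGroup.coe_one] at this
  rw [← this, sub_sub_cancel]

lemma sub_mul_sub_inv_eq_zero (hkk' : Commute k k') (htr : k'.1.trace = k.1.trace) :
    (k'.1 - k.1) * (k'.1 - (k⁻¹).1) = 0 := by
  have hcomm : k.1 * k'.1 = k'.1 * k.1 := congrArg Subtype.val hkk'.eq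
  rw [coe_inv_eq_trace_smul_one_sub]
  simp only [mul_sub, sub_mul, mul_smul_comm, mul_one, hcomm, coe_mul_self, htr]
  module

lemma eq_or_eq_inv_of_commute_of_trace_eq (h2 : h.1.trace ≠ 2) (hneg2 : h.1.trace ≠ -2)
    (hk : Commute k h) (hk' : Commute k' h) (htr : k'.1.trace = k.1.trace) :
    k' = k ∨ k' = k⁻¹ := by
  have h1 := ne_one_of_trace_ne_two h2
  have hneg1 := ne_neg_one_of_trace_ne_neg_two hneg2
  have hinv : (k⁻¹).1.trace = k.1.trace := by
    rw [coe_inv_eq_trace_smul_one_sub, trace_sub, trace_smul, trace_one, Fintype.card_fin,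
      smul_eq_mul, Nat.cast_two]
    ring
  have hzero {l : SL(2, F)} (hl : Commute l h) (hltr : l.1.trace = k.1.trace)
      (hdet : (k'.1 - l.1).det = 0) : k' = l := by
    obtain ⟨α, β, hkαβ⟩ := exists_eq_smul_one_add_smul_of_commute h1 hneg1 hk'
    obtain ⟨γ, δ, hlγδ⟩ := exists_eq_smul_one_add_smul_of_commute h1 hneg1 hl
    have hsub : k'.1 - l.1 = (α - γ) • 1 + (β - δ) • h.1 := by rw [hkαβ, hlγδ]; module
    refine Subtype.ext (sub_eq_zero.1 (hsub.trans (smul_one_add_smul_eq_zero h2 hneg2 ?_ ?_)))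
    · rw [← hsub, trace_sub, htr, hltr, sub_self]
    · rw [← hsub, hdet]
  have hdet := congrArg det
    (sub_mul_sub_inv_eq_zero (commute_of_commute_of_commute h1 hneg1 hk hk') htr)
  rw [det_mul, det_zero, mul_eq_zero] at hdet
  exact hdet.imp (hzero hk rfl) (hzero hk.inv_left hinv)

lemma card_le_two_mul_card_of_commute (h2 : h.1.trace ≠ 2) (hneg2 : h.1.trace ≠ -2)
    {S : Finset SL(2, F)} (hS : ∀ k ∈ S, Commute k h) {T : Finset F}
    (hT : ∀ k ∈ S, k.1.trace ∈ T) : #S ≤ 2 * #T := by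
  classical
  refine card_le_mul_card_image_of_maps_to hT 2 fun s _ ↦ ?_
  rcases {k ∈ S | k.1.trace = s}.eq_empty_or_nonempty with hempty | ⟨k, hk⟩
  · simp [hempty]
  refine (card_le_card fun k' hk' ↦ ?_).trans (card_le_two (a := k) (b := k⁻¹))
  rw [mem_filter] at hk hk'
  simpa using eq_or_eq_inv_of_commute_of_trace_eq h2 hneg2 (hS k hk.1) (hS k' hk'.1)
    (hk'.2.trans hk.2.symm)

lemma card_le_six_of_commute_of_not_hasGenericTrace (h2 : h.1.trace ≠ 2)
    (hneg2 : h.1.trace ≠ -2) {S : Finset SL(2, F)} (hS : ∀ k ∈ S, Commute k h)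
    (hgeneric : ∀ k ∈ S, ¬ HasGenericTrace k) : #S ≤ 6 := by
  classical
  refine (card_le_two_mul_card_of_commute h2 hneg2 hS (T := {0, 2, -2}) fun k hk ↦ ?_).trans
    (Nat.mul_le_mul_left 2 card_le_three)
  simpa [HasGenericTrace, -not_and, not_and_or] using hgeneric k hk

end

end GenericTrace

section ExistsGeneric

variable {F : Type*} [Field F] [DecidableEq SL(2, F)] {A : Finset SL(2, F)}

lemma eq_of_forall_trace_mul_eq (hA : A⁻¹ = A) (hgen : Subgroup.closure (A : Set SL(2, F)) = ⊤)
    {y z : SL(2, F)} (hy : y ∈ A) (h : ∀ x ∈ A, (x * y).1.trace = (x * z).1.trace) : y = z := by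
  by_contra hne
  set m := z.1 - y.1 with hm
  have hm0 : m ≠ 0 := fun h ↦ hne (Subtype.ext (sub_eq_zero.1 h).symm)
  have hinv {a : SL(2, F)} (ha : a ∈ A) : a⁻¹ ∈ A := hA ▸ inv_mem_inv ha
  have hortho {x : SL(2, F)} (hx : x ∈ A) : (x.1 * m).trace = 0 := by
    rw [hm, mul_sub, trace_sub, ← Matrix.SpecialLinearGroup.coe_mul,
      ← Matrix.SpecialLinearGroup.coe_mul, h x hx, sub_self]
  have hdet : m.det = 0 := by
    have hline := det_coe_add_smul y m 1
    rw [one_smul, hm, add_sub_cancel, z.det_coe, ← hm, hortho (hinv hy)] at hline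
    linear_combination -hline
  obtain ⟨e, f, hef⟩ := exists_smul_eq_of_det_eq_zero hm0 hdet
  obtain ⟨a, ha, x, hx, hax⟩ := exists_mem_smul_notMem hgen (Set.toFinite {e, f})
    (Set.insert_nonempty e {f}) (pair_ne_univ e f)
  rcases hx with rfl | rfl
  · exact hax (Or.inr (hef a (hortho ha)))
  · exact hax (Or.inl (inv_smul_eq_iff.1 (hef a⁻¹ (hortho (hinv ha)))).symm)

lemma card_le_card_pow_four_of_trace_mem (hA : A⁻¹ = A)
    (hgen : Subgroup.closure (A : Set SL(2, F)) = ⊤) {T : Finset F}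
    (hT : ∀ g ∈ A ^ 2, g.1.trace ∈ T) : #A ≤ #T ^ 4 := by
  classical
  rcases A.eq_empty_or_nonempty with rfl | ⟨a, ha⟩
  · simp
  have hTpos : 1 ≤ #T := card_pos.2 ⟨_, hT (a * a) (sq A ▸ mul_mem_mul ha ha)⟩
  obtain ⟨b, hbA, hspan, hli⟩ := exists_linearIndependent F (Subtype.val '' (A : Set SL(2, F)))
  have : Fintype b := ((A.finite_toSet.image _).subset hbA).fintype
  have hb4 : Fintype.card b ≤ 4 := by
    simpa [Module.finrank_matrix] using hli.fintype_card_le_finrank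
  have hinj : Set.InjOn (fun (y : SL(2, F)) (x : b) ↦ (x.1 * y.1).trace) A := by
    intro y hy z _ hyz
    refine eq_of_forall_trace_mul_eq hA hgen hy fun x hx ↦ ?_
    let φ (w : SL(2, F)) : Matrix (Fin 2) (Fin 2) F →ₗ[F] F :=
      traceLinearMap (Fin 2) F F ∘ₗ LinearMap.mulRight F w.1
    have hφ : Set.EqOn (φ y) (φ z) (Submodule.span F b) :=
      LinearMap.eqOn_span fun w hw ↦ congrFun hyz ⟨w, hw⟩
    exact hφ (hspan ▸ Submodule.subset_span ⟨x, hx, rfl⟩)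
  calc #A ≤ #(Fintype.piFinset fun _ : b ↦ T) := by
        refine card_le_card_of_injOn _ (fun y hy ↦ ?_) hinj
        refine mem_coe.2 (Fintype.mem_piFinset.2 fun x ↦ ?_)
        obtain ⟨(g : SL(2, F)), hg, hgx⟩ := hbA x.2
        rw [← hgx]
        exact hT (g * y) (sq A ▸ mul_mem_mul hg hy)
    _ = #T ^ Fintype.card b := by rw [Fintype.card_piFinset, prod_const, card_univ]
    _ ≤ #T ^ 4 := Nat.pow_le_pow_right hTpos hb4

lemma exists_hasGenericTrace (hA : A⁻¹ = A) (hgen : Subgroup.closure (A : Set SL(2, F)) = ⊤)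
    (hcard : 81 < #A) : ∃ g ∈ A ^ 2, HasGenericTrace g := by
  classical
  by_contra! h
  have hle : #A ≤ #({0, 2, -2} : Finset F) ^ 4 := by
    refine card_le_card_pow_four_of_trace_mem hA hgen fun g hg ↦ ?_
    simpa [HasGenericTrace, -not_and, not_and_or] using h g hg
  exact hcard.not_ge (hle.trans (Nat.pow_le_pow_left card_le_three 4))

end ExistsGeneric

/-! ### Counting triples of conjugates -/

section TripleCounting

lemma card_sub_le_card_filter_not_and_not {α : Type*} {A : Finset α} {P Q : α → Prop}
    [DecidablePred P] [DecidablePred Q] {m n : ℕ} (hP : #{a ∈ A | P a} ≤ m)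
    (hQ : #{a ∈ A | Q a} ≤ n) : #A - (m + n) ≤ #{a ∈ A | ¬ P a ∧ ¬ Q a} := by
  classical
  have hcompl := card_filter_add_card_filter_not (s := A) fun a ↦ P a ∨ Q a
  have hor : #{a ∈ A | P a ∨ Q a} ≤ m + n := by
    rw [filter_or]
    exact (card_union_le _ _).trans (Nat.add_le_add hP hQ)
  simp only [not_or] at hcompl
  omega

lemma card_mul_mul_le_card_filter_triples {α : Type*} {A : Finset α} {R : α → α → Prop}
    {S : α → α → α → Prop} [DecidableRel R] [∀ a b, DecidablePred (S a b)] {k l : ℕ}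
    (hR : ∀ a ∈ A, k ≤ #{b ∈ A | R a b}) (hS : ∀ a ∈ A, ∀ b ∈ A, l ≤ #{c ∈ A | S a b c}) :
    #A * (k * l) ≤ #{q ∈ A ×ˢ A ×ˢ A | R q.1 q.2.1 ∧ S q.1 q.2.1 q.2.2} := by
  calc #A * (k * l) ≤ ∑ a ∈ A, #{b ∈ A | R a b} * l := by
        rw [← smul_eq_mul]
        exact card_nsmul_le_sum A _ _ fun a ha ↦ Nat.mul_le_mul_right l (hR a ha)
    _ ≤ ∑ a ∈ A, ∑ b ∈ A with R a b, #{c ∈ A | S a b c} := by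
        refine sum_le_sum fun a ha ↦ ?_
        rw [← smul_eq_mul]
        exact card_nsmul_le_sum _ _ _ fun b hb ↦ hS a ha b (mem_filter.1 hb).1
    _ = _ := by
        simp only [card_filter, sum_product, sum_filter, ite_and, sum_ite_irrel, sum_const_zero]

lemma card_conj_eq_le {G : Type*} [Group G] [DecidableEq G] {A : Finset G} (hA : A⁻¹ = A)
    (g y : G) [DecidablePred (· ∈ Subgroup.centralizer {g})] :
    #{a ∈ A | a * g * a⁻¹ = y} ≤ #{k ∈ A ^ 2 | k ∈ Subgroup.centralizer {g}} := by
  classical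
  convert card_filter_le_card_filter_sq_mem_subgroup hA (Subgroup.centralizer {g})
    (P := fun a ↦ a * g * a⁻¹ = y) fun a b ha hb ↦ ?_
  rw [Subgroup.mem_centralizer_singleton_iff]
  calc a⁻¹ * b * g = a⁻¹ * (b * g * b⁻¹) * b := by group
    _ = g * (a⁻¹ * b) := by rw [hb, ← ha]; group

variable {F : Type*} [Field F]

/-- Three pairwise distinct elements, the first two of which have no common fixed point on the
projective line. -/
def IsGeneralTriple (x y z : SL(2, F)) : Prop :=
  (¬ SharesFixedPoint x y ∧ x ≠ y) ∧ x ≠ z ∧ y ≠ z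

lemma card_le_two_of_isGeneralTriple {u v : SL(2, F)} {t : F} (ht : t ≠ 0)
    {S : Finset SL(2, F)} (hS : ∀ x ∈ S, IsGeneralTriple x (u * x) (v * x))
    (htr : ∀ x ∈ S, x.1.trace = t ∧ (u * x).1.trace = t ∧ (v * x).1.trace = t) : #S ≤ 2 := by
  by_contra! hlt
  obtain ⟨x, hx, y, hy, z, hz, hxy, hxz, hyz⟩ := two_lt_card.1 hlt
  obtain ⟨⟨hshare, hux⟩, hvx, huv⟩ := hS x hx
  obtain ⟨hx, hxu, hxv⟩ := htr x hx
  obtain ⟨hy, hyu, hyv⟩ := htr y hy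
  obtain ⟨hz, hzu, hzv⟩ := htr z hz
  have := eq_or_eq_of_trace_eq (by rintro rfl; simp at hux) (by rintro rfl; simp at hvx)
    (by rintro rfl; exact huv rfl) ht hx hxu hxv hshare hy hyu hyv hz hzu hzv
  tauto

variable [DecidableEq SL(2, F)] {A : Finset SL(2, F)} {g : SL(2, F)} {D M : ℕ}

open scoped Classical in
/-- The triples in `A` conjugating `g` to a general triple. -/
noncomputable def generalTriples (A : Finset SL(2, F)) (g : SL(2, F)) :
    Finset (SL(2, F) × SL(2, F) × SL(2, F)) :=
  {q ∈ A ×ˢ A ×ˢ A |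
    IsGeneralTriple (q.1 * g * q.1⁻¹) (q.2.1 * g * q.2.1⁻¹) (q.2.2 * g * q.2.2⁻¹)}

open scoped Classical in
lemma card_pow_three_le_two_mul_card_generalTriples
    (hM : ∀ x y : ℙ F (Fin 2 → F), #{a ∈ A | a • x = y} ≤ M)
    (hD : ∀ y, #{a ∈ A | a * g * a⁻¹ = y} ≤ D) (hg : HasGenericTrace g)
    (hM16 : 16 * M ≤ #A) (hD16 : 16 * D ≤ #A) : #A ^ 3 ≤ 2 * #(generalTriples A g) := by
  let y (a : SL(2, F)) : SL(2, F) := a * g * a⁻¹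
  replace hD (x : SL(2, F)) : #{a ∈ A | x = y a} ≤ D := by
    simpa only [y, eq_comm] using hD x
  have hsecond (a : SL(2, F)) : #A - (4 * M + D) ≤
      #{b ∈ A | ¬ SharesFixedPoint (y a) (y b) ∧ y a ≠ y b} :=
    card_sub_le_card_filter_not_and_not
      (card_sharesFixedPoint_le hM (ne_one_of_trace_ne_two hg.2.1)
        (ne_neg_one_of_trace_ne_neg_two hg.2.2) a) (hD (y a))
  have hthird (a b : SL(2, F)) : #A - (D + D) ≤ #{c ∈ A | y a ≠ y c ∧ y b ≠ y c} :=
    card_sub_le_card_filter_not_and_not (hD (y a)) (hD (y b))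
  have hcount : #A * ((#A - (4 * M + D)) * (#A - (D + D))) ≤ #(generalTriples A g) := by
    convert card_mul_mul_le_card_filter_triples
      (R := fun a b ↦ ¬ SharesFixedPoint (y a) (y b) ∧ y a ≠ y b)
      (S := fun a b c ↦ y a ≠ y c ∧ y b ≠ y c) (fun a _ ↦ hsecond a) fun a _ b _ ↦ hthird a b
    ext q
    rw [generalTriples, mem_filter, mem_filter, IsGeneralTriple]
  have hlarge : 11 * #A * (14 * #A) ≤ 16 * (#A - (4 * M + D)) * (16 * (#A - (D + D))) :=
    Nat.mul_le_mul (by omega) (by omega)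
  nlinarith [Nat.mul_le_mul_left (#A) hlarge]

open scoped Classical in
lemma card_generalTriples_le (hA : A⁻¹ = A) (hgA : g ∈ A ^ 2) (hg : g.1.trace ≠ 0)
    (hD : ∀ y, #{a ∈ A | a * g * a⁻¹ = y} ≤ D) :
    #(generalTriples A g) ≤ D ^ 3 * 2 * #(A ^ 8) ^ 2 := by
  let y (a : SL(2, F)) : SL(2, F) := a * g * a⁻¹
  have hy4 {a : SL(2, F)} (ha : a ∈ A) : y a ∈ A ^ 4 := by
    rw [← pow_one A] at ha
    exact mul_mem_pow_add (mul_mem_pow_add ha hgA) (inv_mem_pow hA ha)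
  rw [sq #(A ^ 8), ← card_product]
  refine card_le_mul_card_image_of_maps_to
    (f := fun q ↦ (y q.2.1 * (y q.1)⁻¹, y q.2.2 * (y q.1)⁻¹)) ?_ _ ?_
  · rintro ⟨a, b, c⟩ habc
    simp only [generalTriples, mem_filter, mem_product] at habc ⊢
    have ha := inv_mem_pow hA (hy4 habc.1.1)
    exact ⟨mul_mem_pow_add (hy4 habc.1.2.1) ha, mul_mem_pow_add (hy4 habc.1.2.2) ha⟩
  rintro ⟨u, v⟩ -
  set fibre := (generalTriples A g).filter
    fun q ↦ (y q.2.1 * (y q.1)⁻¹, y q.2.2 * (y q.1)⁻¹) = (u, v) with hfibre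
  have hmem {q} (hq : q ∈ fibre) : (q.1 ∈ A ∧ q.2.1 ∈ A ∧ q.2.2 ∈ A) ∧
      IsGeneralTriple (y q.1) (y q.2.1) (y q.2.2) ∧
        y q.2.1 = u * y q.1 ∧ y q.2.2 = v * y q.1 := by
    simpa [hfibre, generalTriples, mul_inv_eq_iff_eq_mul, and_assoc] using hq
  have himage : #(fibre.image fun q ↦ y q.1) ≤ 2 := by
    refine card_le_two_of_isGeneralTriple (u := u) (v := v) hg ?_ ?_ <;>
    · simp only [mem_image, forall_exists_index, and_imp, forall_apply_eq_imp_iff₂]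
      intro q hq
      obtain ⟨-, hgeneral, hu, hv⟩ := hmem hq
      simp only [← hu, ← hv]
      first | exact hgeneral | exact ⟨trace_conj _ _, trace_conj _ _, trace_conj _ _⟩
  refine (card_le_mul_card_image (f := fun q ↦ y q.1) fibre (D ^ 3) fun x _ ↦ ?_).trans
    (Nat.mul_le_mul_left _ himage)
  calc _ ≤ #({a ∈ A | y a = x} ×ˢ {b ∈ A | y b = u * x} ×ˢ {c ∈ A | y c = v * x}) := by
        refine card_le_card fun q hq ↦ ?_
        obtain ⟨hqfibre, rfl⟩ := mem_filter.1 hq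
        obtain ⟨⟨ha, hb, hc⟩, -, hu, hv⟩ := hmem hqfibre
        simp [ha, hb, hc, hu, hv]
    _ ≤ D * (D * D) := by
        rw [card_product, card_product]
        gcongr <;> exact hD _
    _ = D ^ 3 := by ring

open scoped Classical in
lemma card_pow_three_le_of_hasGenericTrace (hA : A⁻¹ = A)
    (hM : ∀ x y : ℙ F (Fin 2 → F), 16 * #{a ∈ A | a • x = y} ≤ #A)
    (hgA : g ∈ A ^ 2) (hg : HasGenericTrace g)
    (hD : 16 * #{k ∈ A ^ 2 | k ∈ Subgroup.centralizer {g}} ≤ #A) :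
    #A ^ 3 ≤ 4 * #{k ∈ A ^ 2 | k ∈ Subgroup.centralizer {g}} ^ 3 * #(A ^ 8) ^ 2 := by
  have hconj (y : SL(2, F)) := card_conj_eq_le hA g y
  have hlower := card_pow_three_le_two_mul_card_generalTriples (M := #A / 16)
    (fun x y ↦ (Nat.le_div_iff_mul_le (by norm_num)).2 (mul_comm 16 _ ▸ hM x y)) hconj hg
    (Nat.mul_div_le _ _) hD
  linarith [card_generalTriples_le hA hgA hg.1 hconj]

end TripleCounting

/-! ### Pivoting between centralizers -/

section Pivot

variable {F : Type*} [Field F] {A : Finset SL(2, F)} {a g h y : SL(2, F)}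

open scoped Classical in
lemma card_centralizer_sub_six_le (hh : HasGenericTrace h) (hy : Commute h y) :
    #{k ∈ A | k ∈ Subgroup.centralizer {h}} - 6 ≤ #{k ∈ A | HasGenericTrace k ∧ Commute k y} := by
  rw [tsub_le_iff_right]
  have hsix : #{k ∈ A | k ∈ Subgroup.centralizer {h} ∧ ¬ HasGenericTrace k} ≤ 6 :=
    card_le_six_of_commute_of_not_hasGenericTrace hh.2.1 hh.2.2
      (fun k hk ↦ Subgroup.mem_centralizer_singleton_iff.1 (mem_filter.1 hk).2.1)
      fun k hk ↦ (mem_filter.1 hk).2.2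
  refine (card_le_card fun k hk ↦ ?_).trans ((card_union_le _ _).trans (Nat.add_le_add_left hsix _))
  obtain ⟨hkA, hkh⟩ := mem_filter.1 hk
  have hky : Commute k y := commute_of_commute_of_commute (ne_one_of_trace_ne_two hh.2.1)
    (ne_neg_one_of_trace_ne_neg_two hh.2.2) (Subgroup.mem_centralizer_singleton_iff.1 hkh) hy.symm
  by_cases hk : HasGenericTrace k <;> simp [hkA, hkh, hky, hk]

open scoped Classical in
lemma card_commute_conj_le [Fintype F] [Fintype SL(2, F)] (hg : HasGenericTrace g)
    (hh : HasGenericTrace h) :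
    #{x : SL(2, F) | Commute h (x * g * x⁻¹)} ≤ 4 * Fintype.card F := by
  have hfibre (y : SL(2, F)) : #{x : SL(2, F) | x * g * x⁻¹ = y} ≤ 2 * Fintype.card F :=
    (card_conj_eq_le inv_univ g y).trans <| card_le_two_mul_card_of_commute hg.2.1 hg.2.2
      (fun k hk ↦ Subgroup.mem_centralizer_singleton_iff.1 (mem_filter.1 hk).2) fun _ _ ↦ mem_univ _
  have himage : #(({x : SL(2, F) | Commute h (x * g * x⁻¹)} : Finset SL(2, F)).image
      fun x ↦ x * g * x⁻¹) ≤ 2 * #{g.1.trace} := by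
    refine card_le_two_mul_card_of_commute hh.2.1 hh.2.2 ?_ ?_ <;>
    · simp only [forall_mem_image, mem_filter_univ, mem_singleton]
      first | exact fun _ ↦ Commute.symm | exact fun _ _ ↦ trace_conj _ _
  calc _ ≤ 2 * Fintype.card F * (2 * #{g.1.trace}) :=
        (card_le_mul_card_image _ _ fun y _ ↦ (card_le_card (filter_subset_filter _
          (subset_univ _))).trans (hfibre y)).trans (Nat.mul_le_mul_left _ himage)
    _ = 4 * Fintype.card F := by rw [card_singleton]; ring

open scoped Classical in
lemma card_mul_sub_six_le [Fintype F] [Fintype SL(2, F)] {D : ℕ} (hg : HasGenericTrace g)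
    (hD : ∀ h ∈ A, HasGenericTrace h → D ≤ #{k ∈ A | k ∈ Subgroup.centralizer {h}})
    (hall : ∀ x, ∃ h ∈ A, HasGenericTrace h ∧ Commute h (x * g * x⁻¹)) :
    Fintype.card SL(2, F) * (D - 6) ≤ #A * (4 * Fintype.card F) := by
  refine card_mul_le_card_mul (s := univ) (t := A)
    (fun x h ↦ HasGenericTrace h ∧ Commute h (x * g * x⁻¹)) (fun x _ ↦ ?_) fun h _ ↦ ?_
  · obtain ⟨h, hhA, hh, hcomm⟩ := hall x
    exact (Nat.sub_le_sub_right (hD h hhA hh) 6).trans (card_centralizer_sub_six_le hh hcomm)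
  · by_cases hh : HasGenericTrace h
    · simpa [bipartiteBelow, hh] using card_commute_conj_le hg hh
    · simp [bipartiteBelow, hh]

variable [DecidableEq SL(2, F)]

open scoped Classical in
lemma card_mul_card_centralizer_le (hA : A⁻¹ = A) (ha : a ∈ A) (hh : HasGenericTrace h)
    (hno : ∀ k ∈ A ^ 2, HasGenericTrace k → ¬ Commute k (a * h * a⁻¹)) :
    #A * #{k ∈ A ^ 2 | k ∈ Subgroup.centralizer {h}} ≤ 6 * #(A ^ 4) := by
  have hcomm {k : SL(2, F)} (hk : a⁻¹ * k * a ∈ Subgroup.centralizer {h}) :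
      Commute k (a * h * a⁻¹) := by
    rw [Subgroup.mem_centralizer_singleton_iff] at hk
    calc k * (a * h * a⁻¹) = a * (a⁻¹ * k * a * h) * a⁻¹ := by group
      _ = a * h * a⁻¹ * k := by rw [hk]; group
  have hsix : #{k ∈ A ^ 2 | k ∈ (⊤ : Subgroup SL(2, F)) ∧
      a⁻¹ * k * a ∈ Subgroup.centralizer {h}} ≤ 6 := by
    refine card_le_six_of_commute_of_not_hasGenericTrace (h := a * h * a⁻¹)
      (trace_conj a h ▸ hh.2.1) (trace_conj a h ▸ hh.2.2) (fun k hk ↦ ?_) fun k hk hkgen ↦ ?_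
    · exact hcomm (mem_filter.1 hk).2.2
    · exact hno k (mem_filter.1 hk).1 hkgen (hcomm (mem_filter.1 hk).2.2)
  calc #A * #{k ∈ A ^ 2 | k ∈ Subgroup.centralizer {h}}
      = #{k ∈ A ^ 1 | k ∈ (⊤ : Subgroup SL(2, F))} *
          #{k ∈ A ^ 2 | k ∈ Subgroup.centralizer {h}} := by simp
    _ ≤ _ := card_mem_mul_card_mem_le hA ⊤ _ ha 1 2
    _ ≤ 6 * #(A ^ 4) := Nat.mul_le_mul_right _ hsix

open scoped Classical in
lemma card_mul_le_or_card_mul_sub_six_le [Fintype F] [Fintype SL(2, F)] {D : ℕ}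
    (hA : A⁻¹ = A) (hgen : Subgroup.closure (A : Set SL(2, F)) = ⊤)
    (hgA : g ∈ A ^ 2) (hg : HasGenericTrace g)
    (hD : ∀ h ∈ A ^ 2, HasGenericTrace h → D ≤ #{k ∈ A ^ 2 | k ∈ Subgroup.centralizer {h}}) :
    #A * D ≤ 6 * #(A ^ 4) ∨
      Fintype.card SL(2, F) * (D - 6) ≤ #(A ^ 2) * (4 * Fintype.card F) := by
  let pivots : Set SL(2, F) := {x | ∃ h ∈ A ^ 2, HasGenericTrace h ∧ Commute h (x * g * x⁻¹)}
  by_cases hall : pivots = Set.univ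
  · exact Or.inr (card_mul_sub_six_le hg hD (Set.eq_univ_iff_forall.1 hall))
  have hone : (1 : SL(2, F)) ∈ pivots := ⟨g, hgA, hg, by simp⟩
  obtain ⟨a, ha, x, ⟨h, hhA, hh, hcomm⟩, hax⟩ :=
    exists_mem_smul_notMem hgen pivots.toFinite ⟨1, hone⟩ hall
  refine Or.inl ((Nat.mul_le_mul_left _ (hD h hhA hh)).trans
    (card_mul_card_centralizer_le hA ha hh fun k hkA hk hkh ↦ hax ⟨k, hkA, hk, ?_⟩))
  have hconj : Commute (a * (x * g * x⁻¹) * a⁻¹) (a * h * a⁻¹) := by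
    simpa only [MulAut.conj_apply] using hcomm.symm.map (MulAut.conj a)
  have htr := trace_conj a h
  have := commute_of_commute_of_commute (ne_one_of_trace_ne_two (htr ▸ hh.2.1))
    (ne_neg_one_of_trace_ne_neg_two (htr ▸ hh.2.2)) hkh hconj
  simpa [mul_assoc] using this

end Pivot

/-! ### Quasirandom groups -/

universe u

/-- A group is `d`-quasirandom if its nontrivial finite-dimensional complex representations have
dimension at least `d`. The spaces range over the universe of `G`, which contains a copy of every
finite-dimensional space. -/
def IsQuasirandom (G : Type u) [Group G] (d : ℝ) : Prop :=
  ∀ (V : Type u) [AddCommGroup V] [Module ℂ V] [FiniteDimensional ℂ V]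
    (ρ : Representation ℂ G V), ¬ ρ.IsTrivial → d ≤ Module.finrank ℂ V

lemma mul_norm_sq_map_le_of_eigenvalues {𝕜 E : Type*} [RCLike 𝕜] [NormedAddCommGroup E]
    [InnerProductSpace 𝕜 E] [FiniteDimensional 𝕜 E] (T : E →ₗ[𝕜] E) {d B : ℝ}
    (h : ∀ l : ℝ, Module.End.HasEigenvalue (T.adjoint ∘ₗ T) (l : 𝕜) → d * l ≤ B) (x : E) :
    d * ‖T x‖ ^ 2 ≤ B * ‖x‖ ^ 2 := by
  have hsymm : (T.adjoint ∘ₗ T).IsSymmetric := T.isSymmetric_adjoint_comp_self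
  let b := hsymm.eigenvectorBasis rfl
  have hnorm : ‖T x‖ ^ 2 = ∑ i, hsymm.eigenvalues rfl i * ‖b.repr x i‖ ^ 2 := by
    calc ‖T x‖ ^ 2 = RCLike.re (inner 𝕜 x ((T.adjoint ∘ₗ T) x)) := by
          rw [LinearMap.comp_apply, LinearMap.adjoint_inner_right, inner_self_eq_norm_sq]
      _ = RCLike.re (inner 𝕜 (b.repr x) (b.repr ((T.adjoint ∘ₗ T) x))) := by
          rw [LinearIsometryEquiv.inner_map_map]
      _ = _ := by
          rw [PiLp.inner_apply, map_sum]
          refine sum_congr rfl fun i _ ↦ ?_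
          rw [hsymm.eigenvectorBasis_apply_self_apply, ← smul_eq_mul, inner_smul_right,
            RCLike.re_ofReal_mul, inner_self_eq_norm_sq]
  rw [hnorm, ← b.repr.norm_map x, EuclideanSpace.norm_sq_eq, mul_sum, mul_sum]
  refine sum_le_sum fun i _ ↦ ?_
  rw [← mul_assoc]
  exact mul_le_mul_of_nonneg_right (h _ (hsymm.hasEigenvalue_eigenvalues rfl i)) (sq_nonneg _)

section Convolution

variable {G : Type u} [Group G]

/-- The right regular representation, on the Hilbert space of functions. -/
noncomputable def rightRegular : Representation ℂ G (EuclideanSpace ℂ G) where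
  toFun g :=
    { toFun φ := WithLp.toLp 2 fun x ↦ φ (x * g)
      map_add' φ ψ := by ext x; simp
      map_smul' c φ := by ext x; simp }
  map_one' := by ext φ x; simp
  map_mul' g h := by ext φ x; simp [mul_assoc]

lemma rightRegular_apply (g : G) (φ : EuclideanSpace ℂ G) (x : G) :
    rightRegular g φ x = φ (x * g) := rfl

variable [Fintype G]

/-- Left convolution by `f` on the functions on a finite group. -/
noncomputable def convolve (f : EuclideanSpace ℂ G) :
    EuclideanSpace ℂ G →ₗ[ℂ] EuclideanSpace ℂ G where
  toFun φ := WithLp.toLp 2 fun x ↦ ∑ y, f (x * y⁻¹) * φ y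
  map_add' φ ψ := by ext x; simp [mul_add, sum_add_distrib]
  map_smul' c φ := by ext x; simp [mul_sum, mul_left_comm]

lemma convolve_apply (f φ : EuclideanSpace ℂ G) (x : G) :
    convolve f φ x = ∑ y, f (x * y⁻¹) * φ y := rfl

lemma adjoint_rightRegular (g : G) :
    LinearMap.adjoint (rightRegular g) = rightRegular g⁻¹ := by
  refine ((LinearMap.eq_adjoint_iff _ _).2 fun φ ψ ↦ ?_).symm
  simp only [PiLp.inner_apply, rightRegular_apply]
  simpa using Equiv.sum_comp (Equiv.mulRight g⁻¹) fun x ↦ inner ℂ (φ x) (ψ (x * g))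

lemma commute_rightRegular_convolve (f : EuclideanSpace ℂ G) (g : G) :
    Commute (rightRegular g) (convolve f) := by
  refine LinearMap.ext fun φ ↦ PiLp.ext fun x ↦ ?_
  simp only [Module.End.mul_apply, rightRegular_apply, convolve_apply]
  rw [← Equiv.sum_comp (Equiv.mulRight g)]
  simp [mul_assoc]

lemma commute_rightRegular_adjoint_comp_convolve (f : EuclideanSpace ℂ G) (g : G) :
    Commute (rightRegular g) (LinearMap.adjoint (convolve f) ∘ₗ convolve f) := by
  have hadj : Commute (rightRegular g) (LinearMap.adjoint (convolve f)) := by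
    have := (commute_rightRegular_convolve f g⁻¹).star_star
    rwa [LinearMap.star_eq_adjoint, LinearMap.star_eq_adjoint, adjoint_rightRegular,
      inv_inv] at this
  exact hadj.mul_right (commute_rightRegular_convolve f g)

lemma sum_norm_sq_convolve_le (f : EuclideanSpace ℂ G) {ι : Type*} [Fintype ι]
    {e : ι → EuclideanSpace ℂ G} (he : Orthonormal ℂ e) :
    ∑ i, ‖convolve f (e i)‖ ^ 2 ≤ Fintype.card G * ‖f‖ ^ 2 := by
  let w (x : G) : EuclideanSpace ℂ G := WithLp.toLp 2 fun y ↦ star (f (x * y⁻¹))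
  have hw (x : G) : ‖w x‖ ^ 2 = ‖f‖ ^ 2 := by
    simp only [EuclideanSpace.norm_sq_eq, w, norm_star]
    exact Equiv.sum_comp ((Equiv.inv G).trans (Equiv.mulLeft x)) fun z ↦ ‖f z‖ ^ 2
  have hinner (x : G) (i : ι) : convolve f (e i) x = inner ℂ (w x) (e i) := by
    simp [convolve_apply, PiLp.inner_apply, w, mul_comm]
  calc ∑ i, ‖convolve f (e i)‖ ^ 2 = ∑ x, ∑ i, ‖inner ℂ (e i) (w x)‖ ^ 2 := by
        simp only [EuclideanSpace.norm_sq_eq, hinner, norm_inner_symm]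
        exact sum_comm
    _ ≤ ∑ x, ‖w x‖ ^ 2 := sum_le_sum fun x _ ↦ he.sum_inner_products_le (w x)
    _ = Fintype.card G * ‖f‖ ^ 2 := by simp [hw]

lemma convolve_eq_zero_of_forall_rightRegular_eq {f φ : EuclideanSpace ℂ G} (hf : ∑ z, f z = 0)
    (hφ : ∀ g, rightRegular g φ = φ) : convolve f φ = 0 := by
  have hconst (x : G) : φ x = φ 1 := by
    rw [← one_mul x, ← rightRegular_apply, hφ, one_mul]
  ext x
  simp only [convolve_apply, hconst _, ← sum_mul]
  have hsum : ∑ y, f (x * y⁻¹) = ∑ z, f z :=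
    Equiv.sum_comp ((Equiv.inv G).trans (Equiv.mulLeft x)) f
  rw [hsum, hf, zero_mul, PiLp.zero_apply]

lemma finrank_eigenspace_mul_le (f : EuclideanSpace ℂ G) (l : ℝ) :
    Module.finrank ℂ (Module.End.eigenspace (LinearMap.adjoint (convolve f) ∘ₗ convolve f) l) * l ≤
      Fintype.card G * ‖f‖ ^ 2 := by
  set W := Module.End.eigenspace (LinearMap.adjoint (convolve f) ∘ₗ convolve f) (l : ℂ)
  let b := stdOrthonormalBasis ℂ W
  have hnorm (i) : ‖convolve f (b i)‖ ^ 2 = l := by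
    rw [← @inner_self_eq_norm_sq ℂ, ← LinearMap.adjoint_inner_right, ← LinearMap.comp_apply,
      Module.End.mem_eigenspace_iff.1 (b i).2, inner_smul_right, inner_self_eq_norm_sq_to_K,
      ← Submodule.coe_norm, b.norm_eq_one]
    simp
  simpa [hnorm] using sum_norm_sq_convolve_le f (b.orthonormal.comp_linearIsometry W.subtypeₗᵢ)

theorem IsQuasirandom.mul_norm_sq_convolve_le {d : ℝ} (hG : IsQuasirandom G d)
    {f : EuclideanSpace ℂ G} (hf : ∑ z, f z = 0) (φ : EuclideanSpace ℂ G) :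
    d * ‖convolve f φ‖ ^ 2 ≤ Fintype.card G * ‖f‖ ^ 2 * ‖φ‖ ^ 2 := by
  refine mul_norm_sq_map_le_of_eigenvalues (convolve f) (fun l hl ↦ ?_) φ
  set W := Module.End.eigenspace (LinearMap.adjoint (convolve f) ∘ₗ convolve f) (l : ℂ)
  let ρ : Representation ℂ G W := rightRegular.subrepresentation W fun g ↦
    Module.End.mapsTo_genEigenspace_of_comm
      (commute_rightRegular_adjoint_comp_convolve f g).symm _ 1
  have hl0 : 0 ≤ l := eigenvalue_nonneg_of_nonneg hl fun x ↦ by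
    rw [LinearMap.comp_apply, LinearMap.adjoint_inner_right]
    exact inner_self_nonneg
  by_cases hρ : ρ.IsTrivial
  · obtain ⟨v, hv⟩ := hl.exists_hasEigenvector
    have hconv : convolve f v = 0 := convolve_eq_zero_of_forall_rightRegular_eq hf fun g ↦
      congrArg Subtype.val (ρ.isTrivial_apply g ⟨v, hv.1⟩)
    have hlv := hv.apply_eq_smul
    rw [LinearMap.comp_apply, hconv, map_zero, eq_comm, smul_eq_zero_iff_left hv.2] at hlv
    rw [RCLike.ofReal_eq_zero.1 hlv, mul_zero]
    positivity
  · exact (mul_le_mul_of_nonneg_right (hG W ρ hρ) hl0).trans (finrank_eigenspace_mul_le f l)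

end Convolution

section Indicator

variable {X : Type*} [Fintype X] (A : Finset X)

/-- The indicator function of `A`, as a vector. -/
noncomputable def indicatorVec : EuclideanSpace ℂ X :=
  WithLp.toLp 2 ((A : Set X).indicator 1)

/-- The indicator function of `A` minus its mean. -/
noncomputable def balancedVec : EuclideanSpace ℂ X :=
  WithLp.toLp 2 fun x ↦ indicatorVec A x - #A / Fintype.card X

lemma sum_indicatorVec : ∑ x, indicatorVec A x = #A := by
  classical
  simp [indicatorVec, Set.indicator_apply]

lemma sum_balancedVec [Nonempty X] : ∑ x, balancedVec A x = 0 := by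
  simp [balancedVec, sum_indicatorVec, mul_div_cancel₀]

lemma norm_sq_indicatorVec : ‖indicatorVec A‖ ^ 2 = #A := by
  classical
  simp [EuclideanSpace.norm_sq_eq, indicatorVec, Set.indicator_apply, apply_ite]

lemma norm_sq_balancedVec_le [Nonempty X] : ‖balancedVec A‖ ^ 2 ≤ #A := by
  let mean : EuclideanSpace ℂ X := WithLp.toLp 2 fun _ ↦ #A / Fintype.card X
  have hadd : balancedVec A + mean = indicatorVec A := by
    ext x
    simp [balancedVec, mean]
  have hortho : inner ℂ mean (balancedVec A) = 0 := by
    simp [PiLp.inner_apply, mean, ← sum_mul, sum_balancedVec]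
  have hpyth := norm_add_sq_eq_norm_sq_add_norm_sq_of_inner_eq_zero _ _
    (inner_eq_zero_symm.1 hortho)
  rw [hadd] at hpyth
  nlinarith [norm_sq_indicatorVec A, mul_self_nonneg ‖mean‖]

end Indicator

section ProductSets

variable {G : Type u} [Group G] [Fintype G] [DecidableEq G] (A B : Finset G)

lemma convolve_balancedVec (x : G) :
    convolve (balancedVec A) (indicatorVec B) x =
      A.convolution B x - #A * #B / Fintype.card G := by
  have hcount : (A.convolution B x : ℂ) = ∑ y ∈ B, indicatorVec A (x * y⁻¹) := by
    simp only [convolution, card_filter, sum_product_right, ← eq_mul_inv_iff_mul_eq, sum_ite_eq']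
    simp [indicatorVec, Set.indicator_apply]
  calc convolve (balancedVec A) (indicatorVec B) x = ∑ y ∈ B, balancedVec A (x * y⁻¹) := by
        simp [convolve_apply, indicatorVec, Set.indicator_apply]
    _ = A.convolution B x - #A * #B / Fintype.card G := by
        simp only [balancedVec, sum_sub_distrib, hcount, sum_const, nsmul_eq_mul]
        ring

lemma sum_convolution : ∑ x, A.convolution B x = #A * #B := by
  rw [← card_product]
  exact (card_eq_sum_card_fiberwise fun _ _ ↦ mem_univ _).symm

variable {A B} {d : ℝ}

lemma IsQuasirandom.mul_sum_sq_convolution_sub_le (hG : IsQuasirandom G d) :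
    d * ∑ x, ((A.convolution B x : ℝ) - #A * #B / Fintype.card G) ^ 2 ≤
      Fintype.card G * #A * #B := by
  have hnorm : ‖convolve (balancedVec A) (indicatorVec B)‖ ^ 2 =
      ∑ x, ((A.convolution B x : ℝ) - #A * #B / Fintype.card G) ^ 2 := by
    refine (EuclideanSpace.norm_sq_eq _).trans (sum_congr rfl fun x _ ↦ ?_)
    rw [convolve_balancedVec, ← sq_abs (_ - _ : ℝ), ← Real.norm_eq_abs, ← Complex.norm_real]
    push_cast
    rfl
  rw [← hnorm]
  refine (hG.mul_norm_sq_convolve_le (sum_balancedVec A) _).trans ?_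
  rw [norm_sq_indicatorVec]
  gcongr
  exact norm_sq_balancedVec_le A

theorem IsQuasirandom.card_mul_card_mul_card_mul_le (hG : IsQuasirandom G d) (hd : 0 ≤ d)
    {C : Finset G} (hABC : A * B * C ≠ univ) :
    #A * #B * #C * d ≤ (Fintype.card G : ℝ) ^ 3 := by
  obtain ⟨g, hg⟩ : ∃ g, g ∉ A * B * C := by simpa [eq_univ_iff_forall] using hABC
  set N := (Fintype.card G : ℝ) with hN
  set n := (#A * #B : ℝ)
  have hN0 : 0 < N := by rw [hN]; exact_mod_cast Fintype.card_pos
  have hzero {c : G} (hc : c ∈ C) : A.convolution B (g * c⁻¹) = 0 := by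
    refine convolution_eq_zero.2 fun hmem ↦ hg ?_
    simpa using mul_mem_mul hmem hc
  have hlower : #C * (n / N) ^ 2 ≤ ∑ x, ((A.convolution B x : ℝ) - n / N) ^ 2 := by
    calc #C * (n / N) ^ 2 = ∑ c ∈ C, ((A.convolution B (g * c⁻¹) : ℝ) - n / N) ^ 2 := by
          rw [sum_congr rfl fun c hc ↦ by rw [hzero hc]]
          simp
      _ ≤ ∑ c, ((A.convolution B (g * c⁻¹) : ℝ) - n / N) ^ 2 :=
          sum_le_univ_sum_of_nonneg fun _ ↦ sq_nonneg _
      _ = _ := Equiv.sum_comp ((Equiv.inv G).trans (Equiv.mulLeft g))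
          fun x ↦ ((A.convolution B x : ℝ) - n / N) ^ 2
  have hn0 : 0 ≤ n := by positivity
  rcases hn0.eq_or_lt with hn | hn
  · rw [← hn, zero_mul, zero_mul]
    positivity
  have hupper := (mul_le_mul_of_nonneg_left hlower hd).trans hG.mul_sum_sq_convolution_sub_le
  rw [mul_assoc, div_pow, ← mul_div_assoc, ← mul_div_assoc, div_le_iff₀ (by positivity)] at hupper
  refine le_of_mul_le_mul_left ?_ hn
  linarith

theorem IsQuasirandom.card_mul_card_mul_le (hG : IsQuasirandom G d) (hd : 0 ≤ d) :
    #A * #B * d * Fintype.card G ≤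
      (#(A * B) : ℝ) * ((Fintype.card G : ℝ) ^ 2 + #A * #B * d) := by
  have hvar := hG.mul_sum_sq_convolution_sub_le (A := A) (B := B)
  rw [mul_assoc] at hvar
  set N := (Fintype.card G : ℝ) with hN
  have hN0 : 0 < N := by rw [hN]; exact_mod_cast Fintype.card_pos
  have hsum : ∑ x, (A.convolution B x : ℝ) = #A * #B := by exact_mod_cast sum_convolution A B
  set n := (#A * #B : ℝ)
  have hcauchy : n ^ 2 ≤ #(A * B) * ∑ x, (A.convolution B x : ℝ) ^ 2 := by
    have hsupport : ∑ x ∈ A * B, (A.convolution B x : ℝ) = n := by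
      rw [← hsum]
      exact sum_subset (subset_univ _) fun x _ hx ↦ by rw [convolution_eq_zero.2 hx, Nat.cast_zero]
    rw [← hsupport]
    refine sq_sum_le_card_mul_sum_sq.trans (mul_le_mul_of_nonneg_left ?_ (Nat.cast_nonneg _))
    exact sum_le_univ_sum_of_nonneg fun _ ↦ sq_nonneg _
  have hsq : ∑ x, ((A.convolution B x : ℝ) - n / N) ^ 2 =
      ∑ x, (A.convolution B x : ℝ) ^ 2 - n ^ 2 / N := by
    simp only [sub_sq, sum_add_distrib, sum_sub_distrib, mul_assoc, ← mul_sum, ← sum_mul, hsum,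
      sum_const, card_univ, nsmul_eq_mul, ← hN]
    field
  have hn0 : 0 ≤ n := by positivity
  rcases hn0.eq_or_lt with hn | hn
  · rw [← hn, zero_mul, zero_mul]
    positivity
  refine le_of_mul_le_mul_left ?_ hn
  calc n * (n * d * N) = d * N * n ^ 2 := by ring
    _ ≤ d * N * (#(A * B) * ∑ x, (A.convolution B x : ℝ) ^ 2) := by gcongr
    _ = #(A * B) * N * (d * (∑ x, (A.convolution B x : ℝ) ^ 2 - n ^ 2 / N)) +
          #(A * B) * d * n ^ 2 := by field
    _ ≤ #(A * B) * N * (N * n) + #(A * B) * d * n ^ 2 := by rw [← hsq]; gcongr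
    _ = n * (#(A * B) * (N ^ 2 + n * d)) := by ring

end ProductSets

/-! ### Representations of `SL₂(𝔽_p)` -/

lemma exists_hasEigenvector_ne_one_of_pow_eq_one {K V : Type*} [Field K] [IsAlgClosed K]
    [AddCommGroup V] [Module K V] [FiniteDimensional K V] {T : Module.End K V} {n : ℕ}
    (hn : (n : K) ≠ 0) (hpow : T ^ n = 1) (hT : T ≠ 1) :
    ∃ μ v, μ ^ n = 1 ∧ μ ≠ 1 ∧ T.HasEigenvector μ v := by
  have hsemisimple : T.IsSemisimple :=
    Module.End.isSemisimple_of_squarefree_aeval_eq_zero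
      (Polynomial.separable_X_pow_sub_C 1 hn one_ne_zero).squarefree (by simp [hpow])
  obtain ⟨μ, hμ, hμ1⟩ : ∃ μ, T.HasEigenvalue μ ∧ μ ≠ 1 := by
    by_contra! h
    refine hT (LinearMap.ext fun x ↦ ?_)
    have htop : T.eigenspace 1 = ⊤ := by
      refine top_unique (hsemisimple.iSup_eigenspace_eq_top ▸ iSup_le fun μ ↦ ?_)
      by_cases hμ : T.HasEigenvalue μ
      · rw [h μ hμ]
      · exact (not_not.1 hμ).le.trans bot_le
    simpa using Module.End.mem_eigenspace_iff.1 (htop ▸ Submodule.mem_top : x ∈ T.eigenspace 1)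
  obtain ⟨v, hv⟩ := hμ.exists_hasEigenvector
  refine ⟨μ, v, ?_, hμ1, hv⟩
  have hfix := hv.pow_apply n
  rw [hpow, Module.End.one_apply] at hfix
  exact (smul_left_injective K hv.2 (by simpa using hfix)).symm

lemma hasEigenvector_of_mul_eq_mul_pow {k G V : Type*} [Field k] [Group G] [AddCommGroup V]
    [Module k V] (ρ : Representation k G V) {u d : G} {n : ℕ} (h : u * d = d * u ^ n) {μ : k}
    {v : V} (hv : Module.End.HasEigenvector (ρ u) μ v) :
    Module.End.HasEigenvector (ρ u) (μ ^ n) (ρ d v) := by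
  refine ⟨Module.End.mem_eigenspace_iff.2 ?_, fun h0 ↦ hv.2 ?_⟩
  · rw [← Module.End.mul_apply, ← map_mul, h, map_mul, map_pow, Module.End.mul_apply,
      hv.pow_apply, map_smul]
  · rw [← ρ.inv_self_apply d v, h0, map_zero]

lemma transvection_one_pow {F : Type*} [Field F] {i j : Fin 2} (h : i ≠ j) (n : ℕ) :
    Matrix.SpecialLinearGroup.transvection h (1 : F) ^ n =
      Matrix.SpecialLinearGroup.transvection h (n : F) := by
  induction n with
  | zero => simp
  | succ n ih => rw [pow_succ, ih, ← Matrix.SpecialLinearGroup.transvection_add, Nat.cast_succ]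

lemma transvection_mul_diag2 {F : Type*} [Field F] (b : Fˣ) :
    Matrix.SpecialLinearGroup.transvection zero_ne_one (1 : F) *
        Matrix.SpecialLinearGroup.diag2 (b : F)⁻¹ (inv_ne_zero b.ne_zero) =
      Matrix.SpecialLinearGroup.diag2 (b : F)⁻¹ (inv_ne_zero b.ne_zero) *
        Matrix.SpecialLinearGroup.transvection zero_ne_one ((b ^ 2 : Fˣ) : F) := by
  ext i j
  fin_cases i <;> fin_cases j <;>
    simp [Matrix.SpecialLinearGroup.diag2_coe', Matrix.SpecialLinearGroup.transvection_coe,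
      Matrix.mul_apply, pow_two]

section ZMod

variable {p : ℕ} [Fact p.Prime]

lemma eq_top_of_transvection_mem {N : Subgroup SL(2, ZMod p)} [N.Normal]
    (h : Matrix.SpecialLinearGroup.transvection zero_ne_one 1 ∈ N) : N = ⊤ := by
  have hupper (c : ZMod p) : Matrix.SpecialLinearGroup.transvection zero_ne_one c ∈ N := by
    rw [← ZMod.natCast_zmod_val c, ← transvection_one_pow]
    exact N.pow_mem h _
  have hlower (c : ZMod p) : Matrix.SpecialLinearGroup.transvection one_ne_zero c ∈ N := by
    obtain ⟨w, hw⟩ : ∃ w : SL(2, ZMod p), w.1 = !![0, 1; -1, 0] :=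
      ⟨⟨_, by simp [det_fin_two_of]⟩, rfl⟩
    have hconj : Matrix.SpecialLinearGroup.transvection one_ne_zero c =
        w * Matrix.SpecialLinearGroup.transvection zero_ne_one (-c) * w⁻¹ := by
      refine eq_mul_inv_of_mul_eq (Matrix.SpecialLinearGroup.ext _ _ fun i j ↦ ?_)
      fin_cases i <;> fin_cases j <;>
        simp [hw, Matrix.SpecialLinearGroup.transvection_coe, Matrix.mul_apply]
    rw [hconj]
    exact ‹N.Normal›.conj_mem _ (hupper _) w
  refine top_unique fun g _ ↦ SL2.transvection_induction (· ∈ N) (fun i j hij c ↦ ?_)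
    (fun _ _ ↦ N.mul_mem) g
  fin_cases i <;> fin_cases j <;> first | exact absurd rfl hij | exact hupper c | exact hlower c

lemma sub_one_div_two_le_card_squares (p : ℕ) [Fact p.Prime] :
    ((p : ℝ) - 1) / 2 ≤ Nat.card (powMonoidHom 2 : (ZMod p)ˣ →* (ZMod p)ˣ).range := by
  set S := (powMonoidHom 2 : (ZMod p)ˣ →* (ZMod p)ˣ).range
  have hindex : S.index ≤ 2 := by
    rw [IsCyclic.index_powMonoidHom_range]
    exact Nat.gcd_le_right _ two_pos
  have hcard : p - 1 ≤ Nat.card S * 2 := by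
    rw [← ZMod.card_units p, ← Nat.card_eq_fintype_card, ← S.card_mul_index]
    gcongr
  have : (p : ℝ) ≤ Nat.card S * 2 + 1 := by exact_mod_cast Nat.le_add_of_sub_le hcard
  linarith

/-- Conjugation by the diagonal torus replaces an eigenvalue `μ` of a unipotent element by its
`s`-th power for each nonzero square `s`, which produces `(p - 1) / 2` distinct eigenvalues. -/
theorem isQuasirandom_SL2 : IsQuasirandom SL(2, ZMod p) (((p : ℝ) - 1) / 2) := by
  intro V _ _ _ ρ hρ
  set u : SL(2, ZMod p) := Matrix.SpecialLinearGroup.transvection zero_ne_one 1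
  have hu : ρ u ≠ 1 := fun h ↦ hρ ⟨fun g ↦ by
    have hker : MonoidHom.ker ρ = ⊤ := eq_top_of_transvection_mem (MonoidHom.mem_ker.2 h)
    exact MonoidHom.mem_ker.1 (hker ▸ Subgroup.mem_top g)⟩
  have hpow : ρ u ^ p = 1 := by rw [← map_pow, transvection_one_pow]; simp
  have hp : (p : ℂ) ≠ 0 := Nat.cast_ne_zero.2 (NeZero.ne p)
  obtain ⟨μ, v, hμp, hμ1, hv⟩ := exists_hasEigenvector_ne_one_of_pow_eq_one hp hpow hu
  have hμ : IsPrimitiveRoot μ p := orderOf_eq_prime hμp hμ1 ▸ IsPrimitiveRoot.orderOf μ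
  let S := (powMonoidHom 2 : (ZMod p)ˣ →* (ZMod p)ˣ).range
  have heigenvector (s : S) :
      ∃ w, Module.End.HasEigenvector (ρ u) (μ ^ ((s : (ZMod p)ˣ) : ZMod p).val) w := by
    obtain ⟨_, b, rfl⟩ := s
    refine ⟨_, hasEigenvector_of_mul_eq_mul_pow ρ
      ((transvection_mul_diag2 b).trans (congrArg _ ?_)) hv⟩
    rw [transvection_one_pow, ZMod.natCast_zmod_val]
    rfl
  choose w hw using heigenvector
  have hinj : Function.Injective fun s : S ↦ μ ^ ((s : (ZMod p)ˣ) : ZMod p).val := fun s t hst ↦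
    Subtype.ext <| Units.ext <| ZMod.val_injective p <|
      hμ.pow_inj (ZMod.val_lt _) (ZMod.val_lt _) hst
  have hcard := (Module.End.eigenvectors_linearIndependent' _ _ hinj w hw).fintype_card_le_finrank
  rw [← Nat.card_eq_fintype_card] at hcard
  exact (sub_one_div_two_le_card_squares p).trans (Nat.cast_le.2 hcard)

end ZMod

lemma card_SL2 (F : Type*) [Field F] [Fintype F] [Fintype SL(2, F)] :
    Fintype.card SL(2, F) = Fintype.card F * (Fintype.card F ^ 2 - 1) := by
  set q := Fintype.card F with hq
  have hq1 : 1 < q := Fintype.one_lt_card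
  let det : GL (Fin 2) F →* Fˣ := Matrix.GeneralLinearGroup.det
  have hker : det.ker = (Matrix.SpecialLinearGroup.toGL (n := Fin 2) (R := F)).range := by
    ext g
    constructor
    · intro hg
      exact ⟨⟨g, congrArg Units.val (MonoidHom.mem_ker.1 hg)⟩, Units.ext rfl⟩
    · rintro ⟨h, rfl⟩
      exact MonoidHom.mem_ker.2 (Units.ext h.2)
  have hindex : det.ker.index = q - 1 := by
    rw [Subgroup.index_ker, MonoidHom.range_eq_top.2 Matrix.GeneralLinearGroup.det_surjective,
      Subgroup.card_top, Nat.card_units, Nat.card_eq_fintype_card]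
  have hcardker : Nat.card det.ker = Fintype.card SL(2, F) := by
    rw [hker, ← Nat.card_eq_fintype_card]
    exact Nat.card_congr
      (MonoidHom.ofInjective Matrix.SpecialLinearGroup.toGL_injective).symm.toEquiv
  have hGL : Nat.card (GL (Fin 2) F) = (q ^ 2 - 1) * (q ^ 2 - q) := by
    simp [Matrix.card_GL_field, ← hq]
  have hmul := det.ker.card_mul_index
  rw [hcardker, hindex, hGL, pow_two, ← Nat.mul_sub_one, mul_left_comm, ← mul_assoc] at hmul
  rw [pow_two]
  exact Nat.eq_of_mul_eq_mul_right (Nat.sub_pos_of_lt hq1) hmul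

/-! ### Sets of small tripling -/

lemma card_sq_le_of_card_pow_three_le {G : Type*} [Group G] [DecidableEq G] {A : Finset G} {K : ℝ}
    (hK : #(A ^ 3) ≤ K * #A) : #(A ^ 2) ≤ K * #A :=
  le_trans (mod_cast card_pow_mono two_ne_zero (by norm_num)) hK

lemma IsQuasirandom.card_le_or_card_mul_le {G : Type*} [Group G] [Fintype G] [DecidableEq G]
    {d K : ℝ} (hG : IsQuasirandom G d) (hd : 0 < d) {A : Finset G} (hA : A.Nonempty)
    (hK : #(A ^ 2) ≤ K * #A) :
    Fintype.card G ≤ 2 * K * #A ∨ #A * d ≤ 2 * K * Fintype.card G := by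
  have hn : (0 : ℝ) < #A := by exact_mod_cast hA.card_pos
  have hN : (0 : ℝ) < Fintype.card G := by exact_mod_cast Fintype.card_pos
  have hdoubling := hG.card_mul_card_mul_le hd.le (A := A) (B := A)
  rw [← pow_two A] at hdoubling
  set n := (#A : ℝ)
  set N := (Fintype.card G : ℝ)
  have hKn : 0 ≤ K * n := (Nat.cast_nonneg _).trans hK
  have hbound : n * n * d * N ≤ K * n * (N ^ 2 + n * n * d) :=
    hdoubling.trans (by gcongr)
  rcases le_total (N ^ 2) (n * n * d) with hle | hle
  · refine Or.inl (le_of_mul_le_mul_left (a := n * n * d) ?_ (by positivity))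
    calc n * n * d * N ≤ K * n * (n * n * d + n * n * d) := hbound.trans (by gcongr)
      _ = n * n * d * (2 * K * n) := by ring
  · refine Or.inr (le_of_mul_le_mul_left (a := n * N) ?_ (by positivity))
    calc n * N * (n * d) = n * n * d * N := by ring
      _ ≤ K * n * (N ^ 2 + N ^ 2) := hbound.trans (by gcongr)
      _ = n * N * (2 * K * N) := by ring

section SmallTripling

variable {F : Type*} [Field F] [DecidableEq SL(2, F)] {A : Finset SL(2, F)} {K : ℝ}

open scoped Classical in
lemma sixteen_mul_card_smul_eq_le (hA : A⁻¹ = A)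
    (hgen : Subgroup.closure (A : Set SL(2, F)) = ⊤) (hK : 1 ≤ K) (hAK : #(A ^ 3) ≤ K * #A)
    (hcard : 2 ^ 17 * K ^ 13 ≤ #A) (x y : ℙ F (Fin 2 → F)) : 16 * #{a ∈ A | a • x = y} ≤ #A := by
  by_contra! hlt
  have hn : (0 : ℝ) < #A := lt_of_lt_of_le (by positivity) hcard
  have hfive : #(A ^ 5) ≤ K ^ 3 * #A := small_pow_of_small_tripling (by norm_num) hAK hA
  have hnine : #(A ^ 9) ≤ K ^ 7 * #A := small_pow_of_small_tripling (by norm_num) hAK hA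
  have hescape : (#{a ∈ A | a • x = y} : ℝ) ^ 4 ≤ #(A ^ 5) ^ 2 * (2 * #(A ^ 9)) := by
    exact_mod_cast card_smul_eq_pow_four_le hA hgen x y
  have hlt' : (#A : ℝ) < 16 * #{a ∈ A | a • x = y} := by exact_mod_cast hlt
  set n := (#A : ℝ)
  set c := (#{a ∈ A | a • x = y} : ℝ)
  refine hcard.not_gt (lt_of_mul_lt_mul_left (a := n ^ 3) ?_ (by positivity))
  calc n ^ 3 * n = n ^ 4 := by ring
    _ < (16 * c) ^ 4 := by gcongr
    _ = 2 ^ 16 * c ^ 4 := by ring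
    _ ≤ 2 ^ 16 * ((K ^ 3 * n) ^ 2 * (2 * (K ^ 7 * n))) := by grw [hescape, hfive, hnine]
    _ = n ^ 3 * (2 ^ 17 * K ^ 13) := by ring

open scoped Classical in
lemma card_le_four_mul_card_centralizer_pow_three {g : SL(2, F)} (hA : A⁻¹ = A)
    (hgen : Subgroup.closure (A : Set SL(2, F)) = ⊤) (hK : 1 ≤ K) (hAK : #(A ^ 3) ≤ K * #A)
    (hcard : 2 ^ 17 * K ^ 13 ≤ #A) (hgA : g ∈ A ^ 2) (hg : HasGenericTrace g) :
    #A ≤ 4 * (#{k ∈ A ^ 2 | k ∈ Subgroup.centralizer {g}} : ℝ) ^ 3 * K ^ 12 := by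
  have hn : (0 : ℝ) < #A := lt_of_lt_of_le (by positivity) hcard
  have height : #(A ^ 8) ≤ K ^ 6 * #A := small_pow_of_small_tripling (by norm_num) hAK hA
  refine le_of_mul_le_mul_left (a := (#A : ℝ) ^ 2) ?_ (by positivity)
  rcases le_or_gt (16 * #{k ∈ A ^ 2 | k ∈ Subgroup.centralizer {g}}) #A with hD | hD
  · have hcount : (#A : ℝ) ^ 3 ≤
        4 * #{k ∈ A ^ 2 | k ∈ Subgroup.centralizer {g}} ^ 3 * #(A ^ 8) ^ 2 := by
      exact_mod_cast card_pow_three_le_of_hasGenericTrace hA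
        (sixteen_mul_card_smul_eq_le hA hgen hK hAK hcard) hgA hg hD
    set D := (#{k ∈ A ^ 2 | k ∈ Subgroup.centralizer {g}} : ℝ)
    calc (#A : ℝ) ^ 2 * #A = #A ^ 3 := by ring
      _ ≤ 4 * D ^ 3 * (K ^ 6 * #A) ^ 2 := by grw [hcount, height]
      _ = #A ^ 2 * (4 * D ^ 3 * K ^ 12) := by ring
  · have hD' : (#A : ℝ) ≤ 16 * #{k ∈ A ^ 2 | k ∈ Subgroup.centralizer {g}} := mod_cast hD.le
    have hn' : 2 ^ 17 ≤ (#A : ℝ) :=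
      le_trans (le_mul_of_one_le_right (by norm_num) (one_le_pow₀ hK)) hcard
    set D := (#{k ∈ A ^ 2 | k ∈ Subgroup.centralizer {g}} : ℝ)
    calc (#A : ℝ) ^ 2 * #A = #A ^ 3 := by ring
      _ ≤ (16 * D) ^ 3 := by gcongr
      _ = 2 ^ 12 * D ^ 3 * 1 := by ring
      _ ≤ (4 * #A ^ 2) * D ^ 3 * K ^ 12 := by
          gcongr
          · nlinarith
          · exact one_le_pow₀ hK
      _ = #A ^ 2 * (4 * D ^ 3 * K ^ 12) := by ring

variable [Fintype F]

lemma exists_card_le_and_le_or_card_mul_sub_six_le [Fintype SL(2, F)] (hA : A⁻¹ = A)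
    (hgen : Subgroup.closure (A : Set SL(2, F)) = ⊤) (hK : 1 ≤ K) (hAK : #(A ^ 3) ≤ K * #A)
    (hcard : 2 ^ 17 * K ^ 13 ≤ #A) :
    ∃ D : ℕ, #A ≤ 4 * (D : ℝ) ^ 3 * K ^ 12 ∧
      ((D : ℝ) ≤ 6 * K ^ 2 ∨
        Fintype.card SL(2, F) * ((D : ℝ) - 6) ≤ K * #A * (4 * Fintype.card F)) := by
  classical
  have hn : (2 : ℝ) ^ 17 ≤ #A :=
    le_trans (le_mul_of_one_le_right (by norm_num) (one_le_pow₀ hK)) hcard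
  have hgeneric : {g ∈ A ^ 2 | HasGenericTrace g}.Nonempty := by
    obtain ⟨g, hgA, hg⟩ := exists_hasGenericTrace hA hgen
      (by have : 2 ^ 17 ≤ #A := mod_cast hn
          omega)
    exact ⟨g, mem_filter.2 ⟨hgA, hg⟩⟩
  obtain ⟨g, hgmem, hmin⟩ := exists_min_image _
    (fun h ↦ #{k ∈ A ^ 2 | k ∈ Subgroup.centralizer {h}}) hgeneric
  obtain ⟨hgA, hg⟩ := mem_filter.1 hgmem
  have hpivot := card_mul_le_or_card_mul_sub_six_le hA hgen hgA hg
    fun h hhA hh ↦ hmin h (mem_filter.2 ⟨hhA, hh⟩)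
  refine ⟨_, card_le_four_mul_card_centralizer_pow_three hA hgen hK hAK hcard hgA hg, ?_⟩
  generalize #{k ∈ A ^ 2 | k ∈ Subgroup.centralizer {g}} = D at hpivot
  rcases hpivot with hsmall | hlarge
  · left
    have hfour : #(A ^ 4) ≤ K ^ 2 * #A := small_pow_of_small_tripling (by norm_num) hAK hA
    refine le_of_mul_le_mul_left (a := (#A : ℝ)) ?_ (by linarith)
    calc (#A : ℝ) * D ≤ 6 * #(A ^ 4) := mod_cast hsmall
      _ ≤ #A * (6 * K ^ 2) := by linarith
  · right
    have hsub : (D : ℝ) - 6 ≤ (D - 6 : ℕ) := by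
      rw [sub_le_iff_le_add]
      exact_mod_cast (le_tsub_add : D ≤ D - 6 + 6)
    calc Fintype.card SL(2, F) * ((D : ℝ) - 6) ≤ Fintype.card SL(2, F) * (D - 6 : ℕ) := by gcongr
      _ ≤ (#(A ^ 2) : ℝ) * (4 * Fintype.card F) := mod_cast hlarge
      _ ≤ K * #A * (4 * Fintype.card F) := by grw [card_sq_le_of_card_pow_three_le hAK]

lemma card_field_pow_three_le (F : Type*) [Field F] [Fintype F] [Fintype SL(2, F)] :
    (Fintype.card F : ℝ) ^ 3 ≤ 2 * Fintype.card SL(2, F) := by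
  have hq : (2 : ℝ) ≤ Fintype.card F := by exact_mod_cast Fintype.one_lt_card
  rw [card_SL2, Nat.cast_mul, Nat.cast_sub (Nat.one_le_pow _ _ Fintype.card_pos)]
  push_cast
  nlinarith [mul_nonneg (by linarith : (0 : ℝ) ≤ Fintype.card F) (sub_nonneg.2 hq)]

theorem card_field_pow_six_le (hA : A⁻¹ = A) (hgen : Subgroup.closure (A : Set SL(2, F)) = ⊤)
    (hK : 1 ≤ K) (hAK : #(A ^ 3) ≤ K * #A) (hcard : 2 ^ 17 * K ^ 18 < #A) :
    (Fintype.card F : ℝ) ^ 6 ≤ 2 ^ 14 * K ^ 15 * #A ^ 2 := by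
  have := Fintype.ofFinite SL(2, F)
  have hpow {m : ℕ} (hm : m ≤ 18) : 2 ^ 17 * K ^ m < #A :=
    lt_of_le_of_lt (by gcongr) hcard
  obtain ⟨D, hnD, hD⟩ := exists_card_le_and_le_or_card_mul_sub_six_le hA hgen hK hAK
    (hpow (m := 13) (by norm_num)).le
  have hq : (0 : ℝ) < Fintype.card F := by exact_mod_cast Fintype.card_pos
  have hn : (0 : ℝ) < #A := lt_of_le_of_lt (by positivity) hcard
  set n := (#A : ℝ)
  have hqN : (Fintype.card F : ℝ) ^ 3 ≤ 2 * Fintype.card SL(2, F) := card_field_pow_three_le F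
  set q := (Fintype.card F : ℝ)
  set N := (Fintype.card SL(2, F) : ℝ)
  have hlarge : (6 : ℝ) * K ^ 2 < D := by
    by_contra! hle
    have : n ≤ 864 * K ^ 18 := calc
      n ≤ 4 * (6 * K ^ 2) ^ 3 * K ^ 12 := hnD.trans (by gcongr)
      _ = 864 * K ^ 18 := by ring
    nlinarith [pow_pos (by linarith : 0 < K) 18]
  have htwelve : (12 : ℝ) ≤ D := by
    by_contra! hlt
    have : n ≤ 6912 * K ^ 12 := calc
      n ≤ 4 * 12 ^ 3 * K ^ 12 := hnD.trans (by gcongr)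
      _ = 6912 * K ^ 12 := by ring
    nlinarith [hpow (m := 12) (by norm_num), pow_pos (by linarith : 0 < K) 12]
  have hqD : q ^ 2 * D ≤ 16 * K * n := by
    refine le_of_mul_le_mul_left (a := q) ?_ hq
    calc q * (q ^ 2 * D) = q ^ 3 * D := by ring
      _ ≤ 2 * N * (2 * (D - 6)) :=
          mul_le_mul hqN (by linarith) (by positivity) (by positivity)
      _ = 4 * (N * (D - 6)) := by ring
      _ ≤ 4 * (K * n * (4 * q)) := by grw [hD.resolve_left hlarge.not_ge]
      _ = q * (16 * K * n) := by ring
  refine le_of_mul_le_mul_left (a := n) ?_ hn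
  calc n * q ^ 6 ≤ 4 * (D : ℝ) ^ 3 * K ^ 12 * q ^ 6 := by gcongr
    _ = 4 * K ^ 12 * (q ^ 2 * D) ^ 3 := by ring
    _ ≤ 4 * K ^ 12 * (16 * K * n) ^ 3 := by gcongr
    _ = n * (2 ^ 14 * K ^ 15 * n ^ 2) := by ring

end SmallTripling

section ZMod

variable {p : ℕ} [Fact p.Prime] {A : Finset SL(2, ZMod p)} {K : ℝ}

lemma card_SL2_zmod_le (p : ℕ) [Fact p.Prime] : (Fintype.card SL(2, ZMod p) : ℝ) ≤ p ^ 3 := by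
  rw [card_SL2, ZMod.card]
  norm_cast
  calc p * (p ^ 2 - 1) ≤ p * p ^ 2 := by gcongr; exact Nat.sub_le _ _
    _ = p ^ 3 := by ring

lemma card_pow_three_le_of_pow_three_ne_univ (hA : A ^ 3 ≠ univ) :
    (#A : ℝ) ^ 3 ≤ 4 * (p : ℝ) ^ 8 := by
  have hp : (2 : ℝ) ≤ p := by exact_mod_cast (Fact.out : p.Prime).two_le
  have hgowers := isQuasirandom_SL2.card_mul_card_mul_card_mul_le (by linarith)
    (by rwa [← pow_two, ← pow_succ] : A * A * A ≠ univ)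
  refine le_of_mul_le_mul_left (a := (p : ℝ) / 4) ?_ (by linarith)
  calc (p : ℝ) / 4 * #A ^ 3 ≤ (p - 1) / 2 * #A ^ 3 :=
        mul_le_mul_of_nonneg_right (by linarith) (by positivity)
    _ = (#A : ℝ) * #A * #A * ((p - 1) / 2) := by ring
    _ ≤ ((p : ℝ) ^ 3) ^ 3 := by grw [hgowers, card_SL2_zmod_le]
    _ = p / 4 * (4 * p ^ 8) := by ring

lemma pow_three_le_or_card_le (hA : A.Nonempty) (hK : #(A ^ 2) ≤ K * #A) :
    (p : ℝ) ^ 3 ≤ 4 * K * #A ∨ #A ≤ 8 * K * (p : ℝ) ^ 2 := by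
  have hp : (2 : ℝ) ≤ p := by exact_mod_cast (Fact.out : p.Prime).two_le
  have hn : (0 : ℝ) < #A := by exact_mod_cast hA.card_pos
  have hK0 : 0 ≤ K := nonneg_of_mul_nonneg_left ((Nat.cast_nonneg _).trans hK) hn
  rcases isQuasirandom_SL2.card_le_or_card_mul_le (by linarith) hA hK with hN | hd
  · left
    have := card_field_pow_three_le (ZMod p)
    rw [ZMod.card] at this
    linarith
  · right
    refine le_of_mul_le_mul_left (a := (p : ℝ) / 4) ?_ (by linarith)
    calc (p : ℝ) / 4 * #A ≤ #A * ((p - 1) / 2) := by nlinarith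
      _ ≤ 2 * K * p ^ 3 := by grw [hd, card_SL2_zmod_le]
      _ = p / 4 * (8 * K * p ^ 2) := by ring

theorem card_le_of_small_tripling (hA : A⁻¹ = A)
    (hgen : Subgroup.closure (A : Set SL(2, ZMod p)) = ⊤) (hK : 1 ≤ K)
    (hAK : #(A ^ 3) ≤ K * #A) (hne : A ^ 3 ≠ univ) : #A ≤ 2 ^ 23 * K ^ 18 := by
  by_contra! hcard
  have hn : (0 : ℝ) < #A := lt_of_le_of_lt (by positivity) hcard
  have hpn := card_field_pow_six_le hA hgen hK hAK (lt_of_le_of_lt (by gcongr <;> norm_num) hcard)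
  rw [ZMod.card] at hpn
  have hnp := card_pow_three_le_of_pow_three_ne_univ hne
  refine hcard.not_ge ?_
  rcases pow_three_le_or_card_le (card_pos.1 (mod_cast hn)) (card_sq_le_of_card_pow_three_le hAK)
    with hp | hp
  · refine le_of_mul_le_mul_left (a := (#A : ℝ) ^ 8) ?_ (by positivity)
    calc (#A : ℝ) ^ 8 * #A = (#A ^ 3) ^ 3 := by ring
      _ ≤ (4 * (p : ℝ) ^ 8) ^ 3 := by gcongr
      _ = 64 * ((p : ℝ) ^ 3) ^ 8 := by ring
      _ ≤ 64 * (4 * K * #A) ^ 8 := by gcongr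
      _ = #A ^ 8 * (2 ^ 22 * K ^ 8) := by ring
      _ ≤ #A ^ 8 * (2 ^ 23 * K ^ 18) := by gcongr <;> first | exact hK | norm_num
  · refine le_of_mul_le_mul_left (a := (#A : ℝ) ^ 2) ?_ (by positivity)
    calc (#A : ℝ) ^ 2 * #A = #A ^ 3 := by ring
      _ ≤ (8 * K * (p : ℝ) ^ 2) ^ 3 := by gcongr
      _ = 512 * K ^ 3 * (p : ℝ) ^ 6 := by ring
      _ ≤ 512 * K ^ 3 * (2 ^ 14 * K ^ 15 * #A ^ 2) := by gcongr
      _ = #A ^ 2 * (2 ^ 23 * K ^ 18) := by ring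

end ZMod

end SL2Growth

/-- **Theorem 1.2** (growth in SL₂(F_p)): there are absolute constants `C₀, c > 0` such
that for every prime `p` and every finite symmetric generating set `A` of `SL₂(F_p)`
with `|A| ≥ C₀`, either `A³ = SL₂(F_p)` or `|A³| ≥ c·|A|^{1 + 1/20}`. -/
theorem growth_in_SL2 :
    ∃ C₀ c : ℝ, 0 < C₀ ∧ 0 < c ∧
      ∀ (p : ℕ), p.Prime →
        ∀ A : Finset (Matrix.SpecialLinearGroup (Fin 2) (ZMod p)),
          A⁻¹ = A →
          Subgroup.closure (A : Set (Matrix.SpecialLinearGroup (Fin 2) (ZMod p))) = ⊤ →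
          C₀ ≤ (A.card : ℝ) →
          (((A ^ 3 : Finset (Matrix.SpecialLinearGroup (Fin 2) (ZMod p))) :
              Set (Matrix.SpecialLinearGroup (Fin 2) (ZMod p))) = Set.univ ∨
            c * (A.card : ℝ) ^ ((1 : ℝ) + 1 / 20) ≤ ((A ^ 3).card : ℝ)) := by
  refine ⟨1, 1 / 4, one_pos, by norm_num, fun p hp A hA hgen hcard ↦ or_iff_not_imp_left.2 ?_⟩
  intro hne
  have : Fact p.Prime := ⟨hp⟩
  have hn : (0 : ℝ) < #A := by linarith
  obtain ⟨K, hAK⟩ : ∃ K : ℝ, #(A ^ 3) = K * #A := ⟨_, (div_mul_cancel₀ _ hn.ne').symm⟩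
  have hK : 1 ≤ K := by
    refine le_of_mul_le_mul_right ?_ hn
    rw [one_mul, ← hAK]
    exact_mod_cast card_le_card_pow three_ne_zero
  have hbound : (#A : ℝ) ≤ (4 * K) ^ (20 : ℝ) := calc
    (#A : ℝ) ≤ 2 ^ 23 * K ^ 18 :=
      SL2Growth.card_le_of_small_tripling hA hgen hK hAK.le (by rwa [Ne, ← coe_eq_univ])
    _ ≤ 2 ^ 40 * K ^ 20 := by gcongr <;> first | exact hK | norm_num
    _ = (4 * K) ^ (20 : ℝ) := by rw [Real.rpow_ofNat]; ring
  have hroot : (#A : ℝ) ^ (1 / 20 : ℝ) ≤ 4 * K := by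
    rw [one_div]
    exact (Real.rpow_inv_le_iff_of_pos hn.le (by linarith) (by norm_num)).2 hbound
  calc 1 / 4 * (#A : ℝ) ^ ((1 : ℝ) + 1 / 20) = 1 / 4 * (#A * (#A : ℝ) ^ (1 / 20 : ℝ)) := by
        rw [Real.rpow_add hn, Real.rpow_one]
    _ ≤ 1 / 4 * (#A * (4 * K)) := by gcongr
    _ = ((A ^ 3).card : ℝ) := by rw [hAK]; ring
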